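/- arXiv:2503.16770 — 11 statements merged into one kernel-verified Lean document; each statement's English description precedes it below -/
import Mathlib

section
/- Let D be an α-structure (of some rank r ≥ 0) on a finite vertex set V. Then for every available arc e ∈ 𝒜(D), the digraph D + e is acyclic. -/
open Finset

/-- The set of available arcs of a digraph `D`: pairs `(v,w)` with `v ≠ w` such that
neither `(v,w)` nor its reverse `(w,v)` has been directed. -/
def avail {V : Type*} [Fintype V] [DecidableEq V] (D : Finset (V × V)) : Finset (V × V) :=
  Finset.univ.filter (fun e => e ∉ D ∧ (e.2, e.1) ∉ D ∧ e.1 ≠ e.2)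

/-- A digraph is loopless if it contains no arc of the form `(v,v)`. -/
def Loopless {V : Type*} (D : Finset (V × V)) : Prop := ∀ e ∈ D, e.1 ≠ e.2

/-- The set of tails of arcs of `D`. -/
def tails {V : Type*} [DecidableEq V] (D : Finset (V × V)) : Finset V := D.image Prod.fst

/-- The set of heads of arcs of `D`. -/
def heads {V : Type*} [DecidableEq V] (D : Finset (V × V)) : Finset V := D.image Prod.snd

/-- `D` contains a directed cycle: distinct vertices `v 0, …, v k` with `k ≥ 1` such that
all arcs `(v i, v (i+1))` and the closing arc `(v k, v 0)` lie in `D`. -/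
def HasDirCycle {V : Type*} (D : Finset (V × V)) : Prop :=
  ∃ (k : ℕ) (v : Fin (k + 1) → V), 1 ≤ k ∧ Function.Injective v ∧
    (∀ i : Fin k, (v i.castSucc, v i.succ) ∈ D) ∧ (v (Fin.last k), v 0) ∈ D

/-- A digraph is acyclic if it contains no directed cycle. -/
def Acyclic {V : Type*} (D : Finset (V × V)) : Prop := ¬ HasDirCycle D

/-- `D` is an α-structure of rank `r`: there are `k ≤ r` decisive arcs `e 0, …, e (k-1) ∈ D`
such that `(u,w) ∈ D` iff `(u,w) = ((e i).1, (e j).2)` for some `i ≤ j`. -/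
def IsAlphaStructure {V : Type*} (D : Finset (V × V)) (r : ℕ) : Prop :=
  ∃ (k : ℕ) (e : Fin k → V × V), k ≤ r ∧ (∀ i, e i ∈ D) ∧
    ∀ u w : V, ((u, w) ∈ D ↔ ∃ i j : Fin k, i ≤ j ∧ u = (e i).1 ∧ w = (e j).2)

/-- The subdigraph `D[V ∖ B]` of arcs of `D` with both endpoints outside `B`. -/
def restrictOff {V : Type*} [DecidableEq V] (D : Finset (V × V)) (B : Finset V) :
    Finset (V × V) :=
  D.filter (fun e => e.1 ∉ B ∧ e.2 ∉ B)

/-- `D` is `(i,s,δ)`-safe. -/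
def IsSafe {V : Type*} [Fintype V] [DecidableEq V] (D : Finset (V × V)) (i s δ : ℕ) : Prop :=
  ∃ A B : Finset V, Disjoint A B ∧
    (∀ v ∈ A, ∀ w ∈ B, (v, w) ∈ D) ∧
    (∃ r, IsAlphaStructure (restrictOff D B) r) ∧ tails (restrictOff D B) ⊆ A ∧
    (∃ r, IsAlphaStructure (restrictOff D A) r) ∧ heads (restrictOff D A) ⊆ B ∧
    s ≤ min A.card B.card ∧
    (A ∪ B ≠ Finset.univ →
      2 * s + δ + i = A.card + B.card ∧
      IsAlphaStructure (restrictOff D B) (A.card - s) ∧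
      IsAlphaStructure (restrictOff D A) (B.card - s - δ))

/-- If `D` is an α-structure (of some rank `r`), then for every available arc
`e ∈ 𝒜(D)`, the digraph `D + e` is acyclic. -/
theorem alphaStructure_insert_acyclic {V : Type*} [Fintype V] [DecidableEq V]
    (D : Finset (V × V)) (hL : Loopless D) (r : ℕ) (hD : IsAlphaStructure D r) :
    ∀ e ∈ avail D, Acyclic (insert e D) := by
  obtain ⟨n, a, -, -, hD⟩ := hD
  have hT : ∀ x y z, (x, y) ∈ D → (y, z) ∈ D → (x, z) ∈ D := by
    intro x y z h1 h2
    obtain ⟨i, j, hij, h3, h4⟩ := (hD _ _).1 h1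
    obtain ⟨i', j', hij', h5, h6⟩ := (hD _ _).1 h2
    by_cases h : i ≤ j'
    · exact (hD _ _).2 ⟨i, j', h, h3, h6⟩
    · have h' : i' ≤ j := hij'.trans ((not_le.1 h).le.trans hij)
      exact absurd rfl (hL (y, y) ((hD _ _).2 ⟨i', j, h', h5, h4⟩))
  have hI : ∀ x, (x, x) ∉ D := fun x hx => hL _ hx rfl
  rintro ⟨p, q⟩ he ⟨k, v, -, -, hv, hl⟩
  simp only [avail, Finset.mem_filter, Finset.mem_univ, true_and] at he
  obtain ⟨-, hqp, hne⟩ := he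
  let R : V → V → Prop := fun x y =>
    (x, y) ∈ D ∨ ((x = p ∨ (x, p) ∈ D) ∧ (y = q ∨ (q, y) ∈ D))
  have hR : ∀ x y, (x, y) ∈ insert (p, q) D → R x y := by
    intro x y h
    rcases Finset.mem_insert.1 h with h | h
    · simp only [Prod.mk.injEq] at h
      exact Or.inr ⟨Or.inl h.1, Or.inl h.2⟩
    · exact Or.inl h
  have hno : ∀ x, (x = p ∨ (x, p) ∈ D) → (x = q ∨ (q, x) ∈ D) → False := by
    rintro x (rfl | h1) (h2 | h2)
    · exact hne h2
    · exact hqp h2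
    · subst h2
      exact hqp h1
    · exact hqp (hT _ _ _ h2 h1)
  have hRT : ∀ x y z, R x y → R y z → R x z := by
    rintro x y z (h1 | ⟨h1, h2⟩) (h3 | ⟨h3, h4⟩)
    · exact Or.inl (hT _ _ _ h1 h3)
    · refine Or.inr ⟨Or.inr ?_, h4⟩
      rcases h3 with rfl | h3
      · exact h1
      · exact hT _ _ _ h1 h3
    · refine Or.inr ⟨h1, Or.inr ?_⟩
      rcases h2 with rfl | h2
      · exact h3
      · exact hT _ _ _ h2 h3
    · exact (hno y h3 h2).elim
  have hRI : ∀ x, ¬ R x x := by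
    rintro x (h | ⟨h1, h2⟩)
    · exact hI x h
    · exact hno x h1 h2
  have hall : ∀ i : Fin (k + 1), v 0 = v i ∨ R (v 0) (v i) := by
    intro i
    induction i using Fin.induction with
    | zero => exact Or.inl rfl
    | succ i ih =>
      right
      have h := hR _ _ (hv i)
      rcases ih with ih | ih
      · rw [ih]
        exact h
      · exact hRT _ _ _ ih h
  have h := hR _ _ hl
  rcases hall (Fin.last k) with h' | h'
  · rw [← h'] at h
    exact hRI _ h
  · exact hRI _ (hRT _ _ _ h' h)
end

section
/- Let D be an α-structure of rank r on a finite vertex set V, and let e ∈ 𝒜(D) be an available arc. Then there exists a set {f₁,…,f_t} ⊆ 𝒜(D) of at most min(r, |V| − 2) available arcs such that D' := D ∪ {e, f₁,…,f_t} is an α-structure of rank r + 1; moreover D'⁺ = D⁺ ∪ {e⁺} and D'⁻ = D⁻ ∪ {e⁻}. -/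
open Finset

/-- Given an α-structure `D` of rank `r` and an available arc `e`, there are at
most `min r (|V| − 2)` available arcs `F` such that `D' = D ∪ {e} ∪ F` is an α-structure of
rank `r + 1` with `D'⁺ = D⁺ ∪ {e⁺}` and `D'⁻ = D⁻ ∪ {e⁻}`. -/
theorem alphaStructure_extend {V : Type*} [Fintype V] [DecidableEq V]
    (D : Finset (V × V)) (hL : Loopless D) (r : ℕ) (hD : IsAlphaStructure D r)
    (e : V × V) (he : e ∈ avail D) :
    ∃ F : Finset (V × V), F ⊆ avail D ∧ F.card ≤ min r (Fintype.card V - 2) ∧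
      IsAlphaStructure (insert e (D ∪ F)) (r + 1) ∧
      tails (insert e (D ∪ F)) = insert e.1 (tails D) ∧
      heads (insert e (D ∪ F)) = insert e.2 (heads D) := by
  classical
  obtain ⟨k, f, hkr, hfD, hf⟩ := hD
  obtain ⟨v, w⟩ := e
  simp only [avail, mem_filter, mem_univ, true_and] at he
  obtain ⟨he1, he2, hne⟩ := he
  have hab : ∀ i j : Fin k, i ≤ j → ((f i).1, (f j).2) ∈ D := fun i j h =>
    (hf _ _).2 ⟨i, j, h, rfl, rfl⟩
  have hlt : ∀ i j : Fin k, (f i).1 = (f j).2 → j < i := by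
    intro i j h
    by_contra hc
    exact hL _ (hab i j (not_lt.1 hc)) h
  have hex : ∃ n : ℕ, ∀ j : Fin k, n ≤ j.1 → v ≠ (f j).2 := ⟨k, fun j h => by omega⟩
  obtain ⟨n, hnk, hn1, hn2⟩ : ∃ n : ℕ, n ≤ k ∧ (∀ j : Fin k, n ≤ j.1 → v ≠ (f j).2) ∧
      ∀ i : Fin k, i.1 < n → ∃ t : Fin k, i ≤ t ∧ v = (f t).2 := by
    refine ⟨Nat.find hex, Nat.find_min' hex (fun j h => by omega), Nat.find_spec hex, ?_⟩
    intro i hi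
    have := Nat.find_min hex hi
    push Not at this
    exact this
  -- the new arcs are fine
  have hB : ∀ j : Fin k, n ≤ j.1 → ((f j).2, v) ∉ D := by
    intro j hj h
    obtain ⟨s, t, hst, h1, h2⟩ := (hf _ _).1 h
    have h3 := hlt s j h1.symm
    exact hn1 t (by omega) h2
  have hA : ∀ i : Fin k, i.1 < n → (f i).1 ≠ w := by
    intro i hi h
    obtain ⟨t, ht, hv⟩ := hn2 i hi
    apply he2
    have := hab i t ht
    rwa [h, ← hv] at this
  have hA2 : ∀ i : Fin k, i.1 < n → (w, (f i).1) ∉ D := by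
    intro i hi h
    obtain ⟨t, ht, hv⟩ := hn2 i hi
    obtain ⟨s, l, hsl, h1, h2⟩ := (hf _ _).1 h
    have h3 := hlt i l h2
    apply he2
    have := hab s t (by omega)
    rwa [← h1, ← hv] at this
  let g : Fin k → V × V := fun i => if i.1 < n then ((f i).1, w) else (v, (f i).2)
  let F : Finset (V × V) := (univ.image g).filter (fun x => x ∉ D ∧ x ≠ (v, w))
  have hF : ∀ x, x ∈ F ↔ ((∃ i : Fin k, (i.1 < n ∧ x = ((f i).1, w)) ∨
      (n ≤ i.1 ∧ x = (v, (f i).2))) ∧ x ∉ D ∧ x ≠ (v, w)) := by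
    intro x
    simp only [F, g, mem_filter, mem_image, mem_univ, true_and]
    refine and_congr_left fun _ => exists_congr fun i => ?_
    by_cases h : i.1 < n
    · simp [h, Nat.not_le.2 h, eq_comm]
    · simp [h, Nat.not_lt.1 h, eq_comm]
  have hD' : ∀ x, x ∈ insert (v, w) (D ∪ F) ↔ x = (v, w) ∨ x ∈ D ∨
      (∃ i : Fin k, (i.1 < n ∧ x = ((f i).1, w)) ∨ (n ≤ i.1 ∧ x = (v, (f i).2))) := by
    intro x
    rw [mem_insert, mem_union, hF]
    by_cases h1 : x = (v, w)
    · simp only [h1, true_or]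
    · by_cases h2 : x ∈ D
      · simp only [h2, true_or, or_true]
      · simp only [h1, h2, false_or, ne_eq, not_false_eq_true, and_true]
  have hfst : ∀ i, (f i).1 ∈ tails D := fun i => mem_image_of_mem _ (hfD i)
  have hsnd : ∀ i, (f i).2 ∈ heads D := fun i => mem_image_of_mem _ (hfD i)
  refine ⟨F, ?_, ?_, ?_, ?_, ?_⟩
  · intro x hx
    obtain ⟨⟨i, ⟨hi, rfl⟩ | ⟨hi, rfl⟩⟩, h1, h2⟩ := (hF x).1 hx
    · simp only [avail, mem_filter, mem_univ, true_and]
      exact ⟨h1, hA2 i hi, hA i hi⟩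
    · simp only [avail, mem_filter, mem_univ, true_and]
      exact ⟨h1, hB i hi, hn1 i hi⟩
  · refine le_min ?_ ?_
    · refine le_trans (card_filter_le _ _) (le_trans card_image_le ?_)
      simpa using hkr
    · have hc : ((univ.erase v).erase w : Finset V).card = Fintype.card V - 2 := by
        rw [card_erase_of_mem (by simp [Ne.symm hne]), card_erase_of_mem (mem_univ _), card_univ]
        omega
      rw [← hc]
      refine card_le_card_of_injOn (fun x => if x.1 = v then x.2 else x.1) ?_ ?_
      · intro x hx
        obtain ⟨⟨i, ⟨hi, rfl⟩ | ⟨hi, rfl⟩⟩, h1, h2⟩ := (hF x).1 hx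
        · have h3 : (f i).1 ≠ v := fun h => h2 (by rw [h])
          simp [h3, hA i hi]
        · have h3 : (f i).2 ≠ w := fun h => h2 (by rw [h])
          simp [h3, (hn1 i hi).symm]
      · intro x hx y hy hxy
        obtain ⟨⟨i, ⟨hi, rfl⟩ | ⟨hi, rfl⟩⟩, h1, h2⟩ := (hF x).1 hx <;>
        obtain ⟨⟨j, ⟨hj, rfl⟩ | ⟨hj, rfl⟩⟩, h4, h5⟩ := (hF y).1 hy
        · have h3 : (f i).1 ≠ v := fun h => h2 (by rw [h])
          have h6 : (f j).1 ≠ v := fun h => h5 (by rw [h])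
          simp only [h3, h6, if_false] at hxy
          rw [hxy]
        · have h3 : (f i).1 ≠ v := fun h => h2 (by rw [h])
          simp only [h3, if_false, if_true] at hxy
          have := hlt _ _ hxy
          omega
        · have h3 : (f j).1 ≠ v := fun h => h5 (by rw [h])
          simp only [h3, if_false, if_true] at hxy
          have := hlt _ _ hxy.symm
          omega
        · simp only [if_true] at hxy
          rw [hxy]
  · let p : Fin (k + 1) := ⟨n, by omega⟩
    have hp1 : ∀ i : Fin k, p ≤ p.succAbove i ↔ n ≤ i.1 := by
      intro i
      rw [Fin.le_iff_val_le_val]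
      simp only [Fin.succAbove, Fin.lt_def, p]
      split_ifs with h <;> simp at h ⊢ <;> omega
    have hp2 : ∀ i : Fin k, p.succAbove i ≤ p ↔ i.1 < n := by
      intro i
      rw [Fin.le_iff_val_le_val]
      simp only [Fin.succAbove, Fin.lt_def, p]
      split_ifs with h <;> simp at h ⊢ <;> omega
    refine ⟨k + 1, Fin.insertNth (α := fun _ => V × V) p (v, w) f, by omega, ?_, ?_⟩
    · rw [Fin.forall_iff_succAbove p]
      simp only [Fin.insertNth_apply_same, Fin.insertNth_apply_succAbove]
      exact ⟨mem_insert_self _ _, fun i => mem_insert_of_mem (mem_union_left _ (hfD i))⟩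
    · intro u x
      rw [hD', hf]
      simp only [Fin.exists_iff_succAbove p, Fin.insertNth_apply_same,
        Fin.insertNth_apply_succAbove, Fin.succAbove_le_succAbove_iff, hp1, hp2, le_refl,
        true_and, Prod.mk.injEq]
      constructor
      · rintro (h | ⟨i, j, h⟩ | ⟨i, h | h⟩)
        · exact Or.inl (Or.inl h)
        · exact Or.inr ⟨i, Or.inr ⟨j, h⟩⟩
        · exact Or.inr ⟨i, Or.inl h⟩
        · exact Or.inl (Or.inr ⟨i, h⟩)
      · rintro ((h | ⟨i, h⟩) | ⟨i, h | ⟨j, h⟩⟩)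
        · exact Or.inl h
        · exact Or.inr (Or.inr ⟨i, Or.inr h⟩)
        · exact Or.inr (Or.inr ⟨i, Or.inl h⟩)
        · exact Or.inr (Or.inl ⟨i, j, h⟩)
  · unfold tails at hfst ⊢
    rw [image_insert, image_union, ← insert_union, union_eq_left]
    intro a ha
    obtain ⟨x, hx, rfl⟩ := mem_image.1 ha
    obtain ⟨⟨i, ⟨hi, rfl⟩ | ⟨hi, rfl⟩⟩, h1, h2⟩ := (hF x).1 hx
    · exact mem_insert_of_mem (hfst i)
    · exact mem_insert_self _ _
  · unfold heads at hsnd ⊢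
    rw [image_insert, image_union, ← insert_union, union_eq_left]
    intro a ha
    obtain ⟨x, hx, rfl⟩ := mem_image.1 ha
    obtain ⟨⟨i, ⟨hi, rfl⟩ | ⟨hi, rfl⟩⟩, h1, h2⟩ := (hF x).1 hx
    · exact mem_insert_self _ _
    · exact mem_insert_of_mem (hsnd i)
end

section
/- For every positive integer b, the function g_b is strictly decreasing on the interval [1, 4b]; in particular, g_b is injective on [1, 4b]. -/
open Finset

/-- `G_b(t) := −t/2 + √(bt − t²/4)`. -/
noncomputable def Gf (b : ℕ) (t : ℝ) : ℝ := -t / 2 + Real.sqrt (b * t - t ^ 2 / 4)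

/-- `g_b(t) := G_b(t) − G_b(t−1)`. -/
noncomputable def gf (b : ℕ) (t : ℝ) : ℝ := Gf b t - Gf b (t - 1)

/-- `Q(x,Δ,s,δ,i) := x² + (Δ + 2s + δ + i)x + (1+Δ)(s+i)`. -/
noncomputable def Qf (x Δ s δ i : ℝ) : ℝ := x ^ 2 + (Δ + 2 * s + δ + i) * x + (1 + Δ) * (s + i)

/-- The explicit formula for the inverse of (the restriction of) `g_b`. -/
noncomputable def ginv (b : ℕ) (x : ℝ) : ℝ :=
  2 * b * (1 + 1 / (4 * b) -
    Real.sqrt ((2 * x + 1) ^ 2 / ((2 * x + 1) ^ 2 + 1)) *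
      Real.sqrt (1 - ((2 * x + 1) ^ 2 + 1) / (16 * b ^ 2)))

open Classical in
/-- `τ_b(i) = 1` iff `i > 1` and `g_b(i) − ⌊g_b(i)⌋ ≥ 1/2 + (16b/(i−1) − 4)^{−1/2}`. -/
noncomputable def taub (b : ℕ) (i : ℕ) : ℕ :=
  if 1 < i ∧ (1 : ℝ) / 2 + 1 / Real.sqrt (16 * b / ((i : ℝ) - 1) - 4) ≤
      gf b i - ⌊gf b i⌋ then 1 else 0

/-- `p_b(i) := (Σ_{j=1}^{i} τ_b(j)) mod 2`. -/
noncomputable def pb (b : ℕ) (i : ℕ) : ℕ := (∑ j ∈ Finset.Icc 1 i, taub b j) % 2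

/-- `s_b(i) := Σ_{j=1}^{i} ⌊g_b(j)⌋ + Σ_{j=1}^{i} τ_b(j)·p_b(j−1)`. -/
noncomputable def sb (b : ℕ) (i : ℕ) : ℤ :=
  (∑ j ∈ Finset.Icc 1 i, ⌊gf b j⌋) + ∑ j ∈ Finset.Icc 1 i, (taub b j : ℤ) * (pb b (j - 1) : ℤ)

/-- `φ_{b,a} := 1/2 + (16b/g_b^{−1}(a + 0.5) − 4)^{−1/2}`. -/
noncomputable def phib (b : ℕ) (a : ℕ) : ℝ :=
  1 / 2 + 1 / Real.sqrt (16 * b / ginv b ((a : ℝ) + 0.5) - 4)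

/-- The constant `C_b`. -/
noncomputable def Cb (b : ℕ) : ℝ :=
  1 - (1 + (⌊gf b 1⌋ : ℝ)) / (2 * b) +
    ∑ a ∈ Finset.range (⌊gf b 1⌋.toNat),
      (2 - Real.sqrt ((2 * ((a : ℝ) + phib b a) + 1) ^ 2 / ((2 * ((a : ℝ) + phib b a) + 1) ^ 2 + 1))
         - Real.sqrt ((2 * (a : ℝ) + 3) ^ 2 / ((2 * (a : ℝ) + 3) ^ 2 + 1)))

theorem h_conc (b u v a c : ℝ) (hu0 : 0 ≤ u) (hu : u ≤ 4 * b) (hv0 : 0 ≤ v) (hv : v ≤ 4 * b)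
    (huv : u < v) (ha : 0 < a) (hc : 0 < c) (hac : a + c = 1) :
    a * Real.sqrt (b * u - u ^ 2 / 4) + c * Real.sqrt (b * v - v ^ 2 / 4) <
      Real.sqrt (b * (a * u + c * v) - (a * u + c * v) ^ 2 / 4) := by
  have qu : 0 ≤ b * u - u ^ 2 / 4 := by nlinarith
  have qv : 0 ≤ b * v - v ^ 2 / 4 := by nlinarith
  have h1 := Real.strictConcaveOn_sqrt.concaveOn.2 (Set.mem_Ici.2 qu) (Set.mem_Ici.2 qv)
    ha.le hc.le hac
  simp only [smul_eq_mul] at h1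
  refine h1.trans_lt (Real.sqrt_lt_sqrt (by positivity) ?_)
  have h2 : 0 < a * c * (v - u) ^ 2 := by
    have : 0 < v - u := by linarith
    positivity
  obtain rfl : c = 1 - a := by linarith
  nlinarith

/-- `g_b` is strictly decreasing on `[1, 4b]`; in particular it is injective
there. -/
theorem gf_strictAntiOn (b : ℕ) (hb : 0 < b) :
    StrictAntiOn (gf b) (Set.Icc 1 (4 * (b : ℝ))) ∧
      Set.InjOn (gf b) (Set.Icc 1 (4 * (b : ℝ))) := by
  have main : StrictAntiOn (gf b) (Set.Icc 1 (4 * (b : ℝ))) := by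
    rintro x ⟨hx1, hx2⟩ y ⟨hy1, hy2⟩ hxy
    have hd : 0 < y - x := by linarith
    have hp : 0 < 1 + (y - x) := by linarith
    have hs : (y - x) / (1 + (y - x)) + 1 / (1 + (y - x)) = 1 := by field_simp; ring
    have h1 := h_conc b (x - 1) y ((y - x) / (1 + (y - x))) (1 / (1 + (y - x)))
      (by linarith) (by linarith) (by linarith) hy2 (by linarith) (by positivity)
      (by positivity) hs
    have h2 := h_conc b (x - 1) y (1 / (1 + (y - x))) ((y - x) / (1 + (y - x)))
      (by linarith) (by linarith) (by linarith) hy2 (by linarith) (by positivity)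
      (by positivity) (by linarith)
    have e1 : (y - x) / (1 + (y - x)) * (x - 1) + 1 / (1 + (y - x)) * y = x := by
      field_simp; ring
    have e2 : 1 / (1 + (y - x)) * (x - 1) + (y - x) / (1 + (y - x)) * y = y - 1 := by
      field_simp; ring
    rw [e1] at h1
    rw [e2] at h2
    have e3 : (y - x) / (1 + (y - x)) = 1 - 1 / (1 + (y - x)) := by linarith
    rw [e3] at h1 h2
    unfold gf Gf
    linarith
  exact ⟨main, main.injOn⟩
end

section
/- For every positive integer b and every real t with 1 ≤ t ≤ 2b + (1 − √(8b² − 1))/2, setting x := g_b(t), one has t = 2b·(1 + 1/(4b) − √((2x+1)²/((2x+1)² + 1))·√(1 − ((2x+1)² + 1)/(16b²))). In other words, the inverse of the restriction of g_b to [1, 2b + (1 − √(8b² − 1))/2] is given by g_b^{−1}(x) = 2b·(1 + 1/(4b) − √((2x+1)²/((2x+1)²+1))·√(1 − ((2x+1)²+1)/(16b²))). -/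
open Finset

/-- For `1 ≤ t ≤ 2b + (1 − √(8b² − 1))/2`, setting `x := g_b(t)`, one has
`t = 2b(1 + 1/(4b) − √((2x+1)²/((2x+1)²+1))·√(1 − ((2x+1)²+1)/(16b²)))`, i.e. the inverse of
the restriction of `g_b` is given by the formula `ginv`. -/
theorem gf_inverse_formula (b : ℕ) (hb : 0 < b) (t : ℝ) (ht1 : 1 ≤ t)
    (ht2 : t ≤ 2 * b + (1 - Real.sqrt (8 * b ^ 2 - 1)) / 2) :
    t = ginv b (gf b t) := by
  have hb1 : (1:ℝ) ≤ b := by exact_mod_cast hb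
  have hs : 0 < Real.sqrt (8 * (b:ℝ) ^ 2 - 1) := Real.sqrt_pos.mpr (by nlinarith)
  have hu : 0 < 2 * (b:ℝ) + 1 / 2 - t := by linarith
  have hA : (0:ℝ) ≤ b * t - t ^ 2 / 4 := by nlinarith
  have hB : (0:ℝ) ≤ b * (t - 1) - (t - 1) ^ 2 / 4 := by nlinarith
  have hA2 := Real.sq_sqrt hA
  have hB2 := Real.sq_sqrt hB
  have hy : 2 * gf b t + 1 = 2 * (Real.sqrt (b * t - t ^ 2 / 4) -
      Real.sqrt (b * (t - 1) - (t - 1) ^ 2 / 4)) := by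
    unfold gf Gf; ring
  unfold ginv
  rw [hy]
  generalize Real.sqrt (b * t - t ^ 2 / 4) = A at *
  generalize Real.sqrt (b * (t - 1) - (t - 1) ^ 2 / 4) = B at *
  have hb0 : (b:ℝ) ≠ 0 := by positivity
  rw [← Real.sqrt_mul (by positivity)]
  generalize hyd : 2 * (A - B) = y
  obtain ⟨u, hud⟩ : ∃ u, u = 2 * (b:ℝ) + 1 / 2 - t := ⟨_, rfl⟩
  have hAB : y * (2 * (A + B)) = 2 * u := by rw [← hyd, hud]; linear_combination 4 * hA2 - 4 * hB2
  have hs2 : y ^ 2 + (2 * (A + B)) ^ 2 = 16 * b ^ 2 - 4 * u ^ 2 - 1 := by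
    rw [← hyd, hud]; linear_combination 8 * hA2 + 8 * hB2
  have key : 4 * u ^ 2 * (y ^ 2 + 1) = y ^ 2 * (16 * b ^ 2 - (y ^ 2 + 1)) := by
    linear_combination y ^ 2 * hs2 - (y * (2 * (A + B)) + 2 * u) * hAB
  have hy1 : y ^ 2 + 1 ≠ 0 := by positivity
  have e : y ^ 2 / (y ^ 2 + 1) * (1 - (y ^ 2 + 1) / (16 * (b:ℝ) ^ 2)) = (u / (2 * b)) ^ 2 := by
    field_simp
    linear_combination -4 * key
  rw [e, Real.sqrt_sq (by rw [hud]; positivity), hud]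
  field_simp
  ring
end

section
/- For every positive integer b and every integer i with 1 ≤ i ≤ ⌊g_b^{−1}(0)⌋, Q(⌊g_b(i)⌋, τ_b(i), s_b(i−1), p_b(i−1), i) ≤ b. -/
open Finset

theorem pb_lt (b n : ℕ) : pb b n = 0 ∨ pb b n = 1 := by
  unfold pb; omega

theorem tau_cases (b n : ℕ) : taub b n = 0 ∨ (taub b n = 1 ∧ 1 < n ∧
    (1 : ℝ) / 2 + 1 / Real.sqrt (16 * b / ((n : ℝ) - 1) - 4) ≤ gf b n - ⌊gf b n⌋) := by
  unfold taub
  split_ifs with h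
  · exact Or.inr ⟨rfl, h.1, h.2⟩
  · exact Or.inl rfl

theorem E_bound (b n : ℕ) : (pb b n : ℝ) / 2 ≤ Gf b n - (sb b n : ℝ) := by
  induction n with
  | zero => simp [pb, sb, Gf]
  | succ n ih =>
    have hs : sb b (n + 1) = sb b n + ⌊gf b ((n + 1 : ℕ) : ℝ)⌋
        + (taub b (n + 1) : ℤ) * (pb b n : ℤ) := by
      unfold sb
      rw [Finset.sum_Icc_succ_top (by omega), Finset.sum_Icc_succ_top (by omega)]
      simp only [Nat.add_sub_cancel]
      ring
    have hp : pb b (n + 1) = (pb b n + taub b (n + 1)) % 2 := by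
      unfold pb
      rw [Finset.sum_Icc_succ_top (by omega)]
      omega
    have hg : Gf b ((n + 1 : ℕ) : ℝ) = Gf b n + gf b ((n + 1 : ℕ) : ℝ) := by
      unfold gf
      have : (((n + 1 : ℕ) : ℝ) - 1) = n := by push_cast; ring
      rw [this]; ring
    have hf := Int.floor_le (gf b ((n + 1 : ℕ) : ℝ))
    rw [hs, hp, hg]
    push_cast
    push_cast at hf
    rcases tau_cases b (n + 1) with h | ⟨h, _, h2⟩
    · rcases pb_lt b n with h' | h' <;> rw [h, h'] <;> rw [h'] at ih <;> norm_num at ih ⊢ <;>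
        linarith
    · have h0 : 0 ≤ 1 / Real.sqrt (16 * b / (((n + 1 : ℕ) : ℝ) - 1) - 4) := by positivity
      have h3 : (1 : ℝ) / 2 ≤ gf b ((n + 1 : ℕ) : ℝ) - ⌊gf b ((n + 1 : ℕ) : ℝ)⌋ := by linarith
      clear h2 h0
      push_cast at h3
      rcases pb_lt b n with h' | h' <;> rw [h, h'] <;> rw [h'] at ih <;> norm_num at ih ⊢ <;>
        linarith

theorem le_ginv (b : ℕ) (hb : 0 < b) (t : ℝ) (ht : t ≤ ginv b 0) :
    t ≤ 2 * b + 1 / 2 - Real.sqrt (8 * b ^ 2 - 1) / 2 := by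
  have hb1 : (1 : ℝ) ≤ b := by exact_mod_cast hb
  refine ht.trans (le_of_eq ?_)
  unfold ginv
  rw [← Real.sqrt_mul (by positivity)]
  have : Real.sqrt (8 * b ^ 2 - 1) = 4 * b * Real.sqrt (((2 * 0 + 1) ^ 2 / ((2 * 0 + 1) ^ 2 + 1)) * (1 - ((2 * 0 + 1) ^ 2 + 1) / (16 * b ^ 2))) := by
    rw [Real.sqrt_eq_iff_mul_self_eq (by nlinarith) (by positivity)]
    have h0 : (0:ℝ) ≤ ((2 * 0 + 1) ^ 2 / ((2 * 0 + 1) ^ 2 + 1)) * (1 - ((2 * 0 + 1) ^ 2 + 1) / (16 * b ^ 2)) := by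
      apply mul_nonneg (by positivity)
      rw [sub_nonneg, div_le_one (by positivity)]
      nlinarith
    have := Real.mul_self_sqrt h0
    symm
    calc _ = 16 * (b:ℝ)^2 * (Real.sqrt (((2 * 0 + 1) ^ 2 / ((2 * 0 + 1) ^ 2 + 1)) * (1 - ((2 * 0 + 1) ^ 2 + 1) / (16 * b ^ 2))) * Real.sqrt (((2 * 0 + 1) ^ 2 / ((2 * 0 + 1) ^ 2 + 1)) * (1 - ((2 * 0 + 1) ^ 2 + 1) / (16 * b ^ 2)))) := by ring
      _ = _ := by rw [this]; field_simp; ring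
  rw [this]
  field_simp
  ring

theorem main_ineq (b t R0 R1 a s Δ δ c : ℝ) (hR1 : R1 ^ 2 = b * t - t ^ 2 / 4)
    (hR0 : R0 ^ 2 = b * (t - 1) - (t - 1) ^ 2 / 4) (h0 : 0 ≤ R0) (ha : 0 ≤ a)
    (hf : a ≤ -1 / 2 + R1 - R0) (hE : δ / 2 ≤ -(t - 1) / 2 + R0 - s)
    (hδ : δ = 0 ∨ δ = 1)
    (hΔ : Δ = 0 ∨ (Δ = 1 ∧ 0 ≤ c ∧ c * (4 * R0) = t - 1 ∧
      1 / 2 + c ≤ -1 / 2 + R1 - R0 - a)) :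
    Qf a Δ s δ t < b + 1 := by
  obtain ⟨E, hEE⟩ : ∃ E, E = -(t - 1) / 2 + R0 - s := ⟨_, rfl⟩
  obtain ⟨f, hff⟩ : ∃ f, f = -1 / 2 + R1 - R0 - a := ⟨_, rfl⟩
  have hs : s = -(t - 1) / 2 + R0 - E := by linarith
  have hR : R1 = f + a + 1 / 2 + R0 := by linarith
  have hf0 : 0 ≤ f := by linarith
  have hb : b = (f + a) ^ 2 + (f + a) * (2 * R0 + 1) + R0 + t / 2 := by
    rw [hR] at hR1
    linarith
  have hE' : δ / 2 ≤ E := by linarith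
  unfold Qf
  rw [hs]
  have m1 : 0 ≤ f * a := by positivity
  have m2 : 0 ≤ f * R0 := by positivity
  rcases hΔ with rfl | ⟨rfl, hc, hcR, hcf⟩
  · rw [hb]
    have m3 : 0 ≤ (E - δ / 2) * (2 * a + 1) := mul_nonneg (by linarith) (by linarith)
    rcases hδ with rfl | rfl <;> nlinarith
  · have m3 : 0 ≤ (E - δ / 2) * (2 * a + 2) := mul_nonneg (by linarith) (by linarith)
    have m4 : 0 ≤ (f - (1 / 2 + c)) * (f + 2 * a + 2 * R0 + 1) :=
      mul_nonneg (by linarith) (by linarith)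
    have m5 : 0 ≤ c * (f + 2 * a + 1) := by positivity
    rw [hb]
    rcases hδ with rfl | rfl <;> nlinarith

/-- For `1 ≤ i ≤ ⌊g_b^{−1}(0)⌋`,
`Q(⌊g_b(i)⌋, τ_b(i), s_b(i−1), p_b(i−1), i) ≤ b`. -/
theorem Qf_floor_le (b : ℕ) (hb : 0 < b) (i : ℕ) (hi1 : 1 ≤ i)
    (hi2 : (i : ℤ) ≤ ⌊ginv b 0⌋) :
    Qf ((⌊gf b i⌋ : ℝ)) ((taub b i : ℝ)) ((sb b (i - 1) : ℝ)) ((pb b (i - 1) : ℝ)) (i : ℝ)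
      ≤ b := by
  have hb1 : (1 : ℝ) ≤ b := by exact_mod_cast hb
  have hi : (1 : ℝ) ≤ i := by exact_mod_cast hi1
  have ht := le_ginv b hb i (by
    have := Int.le_floor.mp hi2
    exact_mod_cast this)
  set t : ℝ := (i : ℝ) with htdef
  set r := Real.sqrt (8 * (b : ℝ) ^ 2 - 1) with hr
  have hr2 : r ^ 2 = 8 * (b : ℝ) ^ 2 - 1 := Real.sq_sqrt (by nlinarith)
  have hr1 : 1 ≤ r := by rw [hr, Real.one_le_sqrt]; nlinarith
  have ht2 : t ≤ 2 * b := by linarith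
  have hA1 : 0 ≤ b * t - t ^ 2 / 4 := by nlinarith
  have hA0 : 0 ≤ b * (t - 1) - (t - 1) ^ 2 / 4 := by
    nlinarith [mul_nonneg (sub_nonneg.2 hi) (sub_nonneg.2 ht2)]
  obtain ⟨R1, hR1⟩ : ∃ R, R = Real.sqrt (b * t - t ^ 2 / 4) := ⟨_, rfl⟩
  obtain ⟨R0, hR0⟩ : ∃ R, R = Real.sqrt (b * (t - 1) - (t - 1) ^ 2 / 4) := ⟨_, rfl⟩
  have h1 : 0 ≤ R1 := hR1 ▸ Real.sqrt_nonneg _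
  have h0 : 0 ≤ R0 := hR0 ▸ Real.sqrt_nonneg _
  have hR1s : R1 ^ 2 = b * t - t ^ 2 / 4 := by rw [hR1]; exact Real.sq_sqrt hA1
  have hR0s : R0 ^ 2 = b * (t - 1) - (t - 1) ^ 2 / 4 := by rw [hR0]; exact Real.sq_sqrt hA0
  have hg : gf b t = -1 / 2 + R1 - R0 := by
    unfold gf Gf; rw [← hR1, ← hR0]; ring
  have hg0 : 0 ≤ gf b t := by
    rw [hg]
    have k1 : R0 ≤ b - t / 2 := by
      apply abs_le_of_sq_le_sq' _ (by linarith) |>.2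
      rw [hR0s]
      nlinarith [mul_nonneg (sub_nonneg.2 ht) (by linarith : (0:ℝ) ≤ 2 * b + 1 / 2 + r / 2 - t)]
    have k2 : 1 / 2 + R0 ≤ R1 := by
      apply abs_le_of_sq_le_sq' _ h1 |>.2
      nlinarith
    linarith
  have ha : (0 : ℝ) ≤ (⌊gf b t⌋ : ℝ) := by exact_mod_cast Int.floor_nonneg.mpr hg0
  have hcast : ((i - 1 : ℕ) : ℝ) = t - 1 := by rw [Nat.cast_sub hi1]; simp [htdef]
  have hE := E_bound b (i - 1)
  rw [hcast] at hE
  have hE2 : ((pb b (i - 1) : ℕ) : ℝ) / 2 ≤ -(t - 1) / 2 + R0 - (sb b (i - 1) : ℝ) := by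
    refine hE.trans (le_of_eq ?_)
    unfold Gf; rw [← hR0]
  have key : Qf ((⌊gf b t⌋ : ℝ)) ((taub b i : ℝ)) ((sb b (i - 1) : ℝ)) ((pb b (i - 1) : ℝ)) t
      < b + 1 := by
    refine main_ineq b t R0 R1 _ _ _ _ (1 / Real.sqrt (16 * b / (t - 1) - 4)) hR1s hR0s h0 ha
      (hg ▸ Int.floor_le _) hE2 ?_ ?_
    · rcases pb_lt b (i - 1) with h | h <;> simp [h]
    · rcases tau_cases b i with h | ⟨h, h2, h3⟩
      · left; simp [h]
      · right
        refine ⟨by simp [h], by positivity, ?_, ?_⟩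
        · have hu : 0 < t - 1 := by
            have : (1 : ℝ) < t := by rw [htdef]; exact_mod_cast h2
            linarith
          have hpos : 0 < R0 := by
            rw [hR0]; apply Real.sqrt_pos.2; nlinarith
          have : Real.sqrt (16 * b / (t - 1) - 4) = 4 * R0 / (t - 1) := by
            have e : 16 * b / (t - 1) - 4 = (4 * R0 / (t - 1)) ^ 2 := by
              rw [div_pow, mul_pow, hR0s]; field_simp; ring
            rw [e, Real.sqrt_sq (by positivity)]
          rw [this]; field_simp
        · rw [← hg]; exact h3
  have hint : Qf ((⌊gf b t⌋ : ℝ)) ((taub b i : ℝ)) ((sb b (i - 1) : ℝ)) ((pb b (i - 1) : ℝ)) t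
      = ((⌊gf b t⌋ ^ 2 + ((taub b i : ℤ) + 2 * sb b (i - 1) + (pb b (i - 1) : ℤ) + (i : ℤ)) * ⌊gf b t⌋
        + (1 + (taub b i : ℤ)) * (sb b (i - 1) + (i : ℤ)) : ℤ) : ℝ) := by
    unfold Qf; push_cast; rfl
  rw [hint] at key ⊢
  have key2 : (⌊gf b t⌋ ^ 2 + ((taub b i : ℤ) + 2 * sb b (i - 1) + (pb b (i - 1) : ℤ) + (i : ℤ)) * ⌊gf b t⌋
        + (1 + (taub b i : ℤ)) * (sb b (i - 1) + (i : ℤ)) : ℤ) < (b : ℤ) + 1 := by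
    exact_mod_cast key
  exact_mod_cast Int.lt_add_one_iff.mp key2
end

section
/- For every positive integer b and every integer i with 0 ≤ i ≤ ⌊g_b^{−1}(0)⌋, s_b(i) ≤ G_b(i) − p_b(i)/2. -/
open Finset

theorem sb_le_Gf_aux (b : ℕ) (i : ℕ) :
    (sb b i : ℝ) ≤ Gf b i - (pb b i : ℝ) / 2 := by
  induction i with
  | zero => simp [sb, pb, Gf]
  | succ n ih =>
    have hs : sb b (n+1) = sb b n + ⌊gf b ((n+1 : ℕ) : ℝ)⌋
        + (taub b (n+1) : ℤ) * (pb b n : ℤ) := by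
      unfold sb
      rw [Finset.sum_Icc_succ_top (by omega), Finset.sum_Icc_succ_top (by omega)]
      simp only [Nat.add_sub_cancel]
      ring
    have hp : pb b (n+1) = (pb b n + taub b (n+1)) % 2 := by
      unfold pb
      rw [Finset.sum_Icc_succ_top (by omega)]
      omega
    have hg : gf b ((n+1 : ℕ) : ℝ) = Gf b ((n+1 : ℕ) : ℝ) - Gf b n := by
      unfold gf
      push_cast
      simp
    have hfl := Int.floor_le (gf b ((n+1 : ℕ) : ℝ))
    have ht : taub b (n+1) = 0 ∨ (taub b (n+1) = 1 ∧
        (1:ℝ)/2 ≤ gf b ((n+1 : ℕ) : ℝ) - ⌊gf b ((n+1 : ℕ) : ℝ)⌋) := by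
      unfold taub
      split_ifs with h
      · right
        refine ⟨rfl, le_trans ?_ h.2⟩
        have : 0 ≤ 1 / Real.sqrt (16 * b / (((n+1 : ℕ) : ℝ) - 1) - 4) := by positivity
        linarith
      · left; rfl
    have hp2 : pb b n = 0 ∨ pb b n = 1 := by
      unfold pb; omega
    rw [hs, hp]
    generalize ⌊gf b ((n+1 : ℕ) : ℝ)⌋ = z at *
    generalize gf b ((n+1 : ℕ) : ℝ) = w at *
    generalize Gf b ((n+1 : ℕ) : ℝ) = v at *
    rcases ht with h0 | ⟨h0, hf⟩ <;> rcases hp2 with h | h <;>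
      rw [h] at ih ⊢ <;> rw [h0] <;> norm_num at ih ⊢ <;> linarith

/-- For `0 ≤ i ≤ ⌊g_b^{−1}(0)⌋`, `s_b(i) ≤ G_b(i) − p_b(i)/2`. -/
theorem sb_le_Gf (b : ℕ) (hb : 0 < b) (i : ℕ) (hi : (i : ℤ) ≤ ⌊ginv b 0⌋) :
    (sb b i : ℝ) ≤ Gf b i - (pb b i : ℝ) / 2 := by
  exact sb_le_Gf_aux b i
end

section
/- For every positive integer b and every integer i with 1 ≤ i ≤ 4b, p_b(i−1)/2 + g_b(i) − ⌊g_b(i)⌋ − τ_b(i)·p_b(i−1) ≥ p_b(i)/2. -/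
open Finset

/-- For `1 ≤ i ≤ 4b`,
`p_b(i−1)/2 + g_b(i) − ⌊g_b(i)⌋ − τ_b(i)·p_b(i−1) ≥ p_b(i)/2`. -/
theorem pb_inequality (b : ℕ) (hb : 0 < b) (i : ℕ) (hi1 : 1 ≤ i) (hi2 : i ≤ 4 * b) :
    (pb b (i - 1) : ℝ) / 2 + gf b i - (⌊gf b i⌋ : ℝ) - (taub b i : ℝ) * (pb b (i - 1) : ℝ)
      ≥ (pb b i : ℝ) / 2 := by
  have hf : (0:ℝ) ≤ gf b i - (⌊gf b i⌋ : ℝ) := by linarith [Int.floor_le (gf b i)]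
  obtain ⟨k, rfl⟩ : ∃ k, i = k + 1 := ⟨i - 1, by omega⟩
  have hs : pb b (k + 1) = (pb b k + taub b (k + 1)) % 2 := by
    unfold pb
    rw [Finset.sum_Icc_succ_top (by omega)]
    omega
  have ht : taub b (k + 1) = 0 ∨ (taub b (k + 1) = 1 ∧
      (1:ℝ) / 2 ≤ gf b (k + 1 : ℕ) - (⌊gf b (k + 1 : ℕ)⌋ : ℝ)) := by
    unfold taub
    split_ifs with h
    · refine Or.inr ⟨rfl, le_trans ?_ h.2⟩
      have : (0:ℝ) ≤ 1 / Real.sqrt (16 * b / (((k + 1 : ℕ) : ℝ) - 1) - 4) := by positivity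
      linarith
    · exact Or.inl rfl
  have hp : pb b k = 0 ∨ pb b k = 1 := by
    unfold pb
    omega
  rw [hs, Nat.add_sub_cancel]
  generalize (⌊gf b (k + 1 : ℕ)⌋ : ℝ) = F at *
  generalize gf b (k + 1 : ℕ) = g at *
  rcases ht with h | ⟨h, h2⟩ <;> rcases hp with h' | h' <;> rw [h, h'] <;> norm_num <;> linarith
end

section
/- For every positive integer b, Σ_{i=1}^{⌊g_b^{−1}(0)⌋} ⌊g_b(i)⌋ = Σ_{a=1}^{⌊g_b(1)⌋} ⌊g_b^{−1}(a)⌋. -/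
open Finset

lemma ginv_spec (b : ℕ) (hb : 0 < b) (a : ℝ) (hab : (2*a+1)^2 + 1 ≤ 4 * (b:ℝ)) :
    ∃ D : ℝ, 0 ≤ D ∧ ginv b a = 2 * b + 1/2 - D ∧
      4 * D^2 * ((2*a+1)^2 + 1) = (2*a+1)^2 * (16 * (b:ℝ)^2 - ((2*a+1)^2 + 1)) := by
  have hb1 : (1:ℝ) ≤ b := by exact_mod_cast hb
  have hy : 0 < (2*a+1)^2 + 1 := by positivity
  refine ⟨2 * b * (Real.sqrt ((2 * a + 1) ^ 2 / ((2 * a + 1) ^ 2 + 1)) *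
      Real.sqrt (1 - ((2 * a + 1) ^ 2 + 1) / (16 * b ^ 2))), by positivity, ?_, ?_⟩
  · unfold ginv
    field_simp
    ring
  · have h1 : 0 ≤ (2 * a + 1) ^ 2 / ((2 * a + 1) ^ 2 + 1) := by positivity
    have h2 : 0 ≤ 1 - ((2 * a + 1) ^ 2 + 1) / (16 * (b:ℝ) ^ 2) := by
      rw [sub_nonneg, div_le_one (by positivity)]
      nlinarith
    rw [mul_pow, mul_pow (Real.sqrt _), Real.sq_sqrt h1, Real.sq_sqrt h2]
    field_simp
    ring

lemma gf_sq (b : ℕ) (a t : ℝ) (ha : 0 ≤ a) (ht1 : 1 ≤ t) (ht : t ≤ 2 * b + 1/2) :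
    a ≤ gf b t ↔ (2*a+1)^2 ≤ 2 * (2 * b - t + 1/2) ∧
      (2*a+1)^2 * (16 * (b:ℝ)^2 - ((2*a+1)^2 + 1)) ≤
        4 * (2 * b - t + 1/2)^2 * ((2*a+1)^2 + 1) := by
  have hP : 0 ≤ b * t - t^2/4 := by nlinarith
  have hQ : 0 ≤ b * (t-1) - (t-1)^2/4 := by nlinarith
  set P := Real.sqrt (b * t - t^2/4) with hPd
  set Q := Real.sqrt (b * (t-1) - (t-1)^2/4) with hQd
  have hP2 : P^2 = b * t - t^2/4 := Real.sq_sqrt hP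
  have hQ2 : Q^2 = b * (t-1) - (t-1)^2/4 := Real.sq_sqrt hQ
  have hP0 : 0 ≤ P := Real.sqrt_nonneg _
  have hQ0 : 0 ≤ Q := Real.sqrt_nonneg _
  have hg : gf b t = -1/2 + (P - Q) := by
    unfold gf Gf
    rw [← hPd, ← hQd]; ring
  set y := 2*a+1 with hy
  have hy1 : 1 ≤ y := by linarith
  have hya : a = (y-1)/2 := by linarith
  set c := 2 * (b:ℝ) - t + 1/2 with hc
  have htc : t = 2 * (b:ℝ) + 1/2 - c := by linarith
  have key : (2*c - y^2)^2 - (4*y*Q)^2 = 4 * c^2 * (y^2+1) - y^2 * (16 * (b:ℝ)^2 - (y^2+1)) := by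
    rw [mul_pow, hQ2, htc]; ring
  have hPQ : 4 * P^2 = 4 * Q^2 + 2 * c := by rw [hP2, hQ2, htc]; ring
  rw [hg]
  constructor
  · intro h
    have h1 : 2 * Q + y ≤ 2 * P := by linarith
    have h2 : 4 * y * Q ≤ 2 * c - y^2 := by nlinarith
    have h3 : 0 ≤ 4 * y * Q := by positivity
    refine ⟨by linarith, ?_⟩
    have := pow_le_pow_left₀ h3 h2 2
    linarith
  · rintro ⟨h1, h2⟩
    have h3 : 4 * y * Q ≤ 2 * c - y^2 := abs_le_of_sq_le_sq' (by linarith) (by linarith) |>.2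
    have : 2 * Q + y ≤ 2 * P := abs_le_of_sq_le_sq' (by nlinarith) (by linarith) |>.2
    linarith

lemma gf_iff (b : ℕ) (hb : 0 < b) (a t : ℝ) (ha : 0 ≤ a) (ht1 : 1 ≤ t) (ht : t ≤ 2 * b + 1/2)
    (hab : (2*a+1)^2 + 1 ≤ 4 * (b:ℝ)) : a ≤ gf b t ↔ t ≤ ginv b a := by
  rw [gf_sq b a t ha ht1 ht]
  obtain ⟨D, hD, h1, h2⟩ := ginv_spec b hb a hab
  rw [h1, ← h2]
  set y := 2*a+1 with hy
  have hy0 : 0 < y^2 + 1 := by positivity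
  constructor
  · rintro ⟨_, h⟩
    have h3 : D^2 ≤ (2 * b - t + 1/2)^2 := by
      have := le_of_mul_le_mul_right h hy0
      linarith
    have := abs_le_of_sq_le_sq' h3 (by linarith) |>.2
    linarith
  · intro h
    have h3 : D ≤ 2 * b - t + 1/2 := by linarith
    refine ⟨?_, ?_⟩
    · have h4 : (y^2)^2 ≤ (2*D)^2 := by
        refine le_of_mul_le_mul_right (a := y^2+1) ?_ hy0
        have h5 : (y^2+1)^2 ≤ (4*(b:ℝ))^2 := pow_le_pow_left₀ hy0.le hab 2
        have h6 := mul_le_mul_of_nonneg_left h5 (sq_nonneg y)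
        nlinarith
      have := abs_le_of_sq_le_sq' h4 (by linarith) |>.2
      linarith
    · gcongr

lemma gf_bound (b : ℕ) (a t : ℝ) (ha : 0 ≤ a) (ht1 : 1 ≤ t) (ht : t ≤ 2 * b + 1/2)
    (h : a ≤ gf b t) : (2*a+1)^2 + 1 ≤ 4 * (b:ℝ) := by
  have := ((gf_sq b a t ha ht1 ht).1 h).1
  linarith

lemma gf_one (b : ℕ) (hb : 0 < b) (a : ℝ) (ha : 0 ≤ a) (hab : (2*a+1)^2 + 1 ≤ 4 * (b:ℝ)) :
    a ≤ gf b 1 := by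
  have hb1 : (1:ℝ) ≤ b := by exact_mod_cast hb
  rw [gf_sq b a 1 ha le_rfl (by linarith)]
  refine ⟨by linarith, ?_⟩
  nlinarith [sq_nonneg ((2*a+1)^2 + 1 - 4 * (b:ℝ))]

lemma floor_eq_sum (x : ℝ) (hx : 0 ≤ x) (M : ℕ) (h : ∀ n : ℕ, 1 ≤ n → (n:ℝ) ≤ x → n ≤ M) :
    ⌊x⌋ = ∑ n ∈ Finset.Icc 1 M, if (n:ℝ) ≤ x then (1:ℤ) else 0 := by
  rw [← Finset.sum_filter, Finset.sum_const]
  have : Finset.filter (fun n : ℕ => (n:ℝ) ≤ x) (Finset.Icc 1 M) = Finset.Icc 1 ⌊x⌋₊ := by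
    ext n
    simp only [Finset.mem_filter, Finset.mem_Icc, Nat.le_floor_iff hx]
    constructor
    · rintro ⟨⟨h1, _⟩, h2⟩; exact ⟨h1, h2⟩
    · rintro ⟨h1, h2⟩; exact ⟨⟨h1, h n h1 h2⟩, h2⟩
  rw [this, Nat.card_Icc]
  simp [Int.natCast_floor_eq_floor hx]

lemma nat_le_toNat_floor (x : ℝ) (n : ℕ) (hn : 1 ≤ n) : n ≤ ⌊x⌋.toNat ↔ (n:ℝ) ≤ x := by
  have h : n ≤ ⌊x⌋.toNat ↔ (n:ℤ) ≤ ⌊x⌋ := by omega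
  rw [h, Int.le_floor]; simp

/-- `Σ_{i=1}^{⌊g_b^{−1}(0)⌋} ⌊g_b(i)⌋ = Σ_{a=1}^{⌊g_b(1)⌋} ⌊g_b^{−1}(a)⌋`. -/
theorem sum_floor_gf_eq (b : ℕ) (hb : 0 < b) :
    ∑ i ∈ Finset.Icc 1 (⌊ginv b 0⌋.toNat), ⌊gf b i⌋ =
      ∑ a ∈ Finset.Icc 1 (⌊gf b 1⌋.toNat), ⌊ginv b (a : ℝ)⌋ := by
  have hb1 : (1:ℝ) ≤ b := by exact_mod_cast hb
  have h0 : (2*(0:ℝ)+1)^2 + 1 ≤ 4 * (b:ℝ) := by linarith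
  have hle : ∀ a : ℝ, (2*a+1)^2 + 1 ≤ 4 * (b:ℝ) → ginv b a ≤ 2 * b + 1/2 := by
    intro a hab
    obtain ⟨D, hD, h1, _⟩ := ginv_spec b hb a hab
    linarith
  have hI : ∀ i ∈ Finset.Icc 1 (⌊ginv b 0⌋.toNat), (1:ℝ) ≤ i ∧ (i:ℝ) ≤ ginv b 0 := by
    intro i hi
    rw [Finset.mem_Icc] at hi
    exact ⟨by exact_mod_cast hi.1, (nat_le_toNat_floor _ _ hi.1).1 hi.2⟩
  have hA : ∀ a ∈ Finset.Icc 1 (⌊gf b 1⌋.toNat), (2*(a:ℝ)+1)^2 + 1 ≤ 4 * (b:ℝ) := by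
    intro a ha
    rw [Finset.mem_Icc] at ha
    exact gf_bound b a 1 (by positivity) le_rfl (by linarith) ((nat_le_toNat_floor _ _ ha.1).1 ha.2)
  have hL : ∀ i ∈ Finset.Icc 1 (⌊ginv b 0⌋.toNat), ⌊gf b i⌋ =
      ∑ a ∈ Finset.Icc 1 (⌊gf b 1⌋.toNat), if (a:ℝ) ≤ gf b i then (1:ℤ) else 0 := by
    intro i hi
    obtain ⟨h1, h2⟩ := hI i hi
    have h3 := h2.trans (hle 0 h0)
    refine floor_eq_sum _ ((gf_iff b hb 0 i le_rfl h1 h3 h0).2 h2) _ ?_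
    intro n hn hni
    rw [nat_le_toNat_floor _ _ hn]
    exact gf_one b hb n (by positivity) (gf_bound b n i (by positivity) h1 h3 hni)
  have hR : ∀ a ∈ Finset.Icc 1 (⌊gf b 1⌋.toNat), ⌊ginv b (a:ℝ)⌋ =
      ∑ i ∈ Finset.Icc 1 (⌊ginv b 0⌋.toNat), if (i:ℝ) ≤ ginv b a then (1:ℤ) else 0 := by
    intro a ha
    have hab := hA a ha
    have ha0 : (0:ℝ) ≤ a := by positivity
    refine floor_eq_sum _ ?_ _ ?_
    · have := (gf_iff b hb a 1 ha0 le_rfl (by linarith) hab).1 (gf_one b hb a ha0 hab)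
      linarith
    · intro n hn hni
      have hn1 : (1:ℝ) ≤ n := by exact_mod_cast hn
      have h3 := hni.trans (hle a hab)
      rw [nat_le_toNat_floor _ _ hn]
      exact (gf_iff b hb 0 n le_rfl hn1 h3 h0).1
        (ha0.trans ((gf_iff b hb a n ha0 hn1 h3 hab).2 hni))
  rw [Finset.sum_congr rfl hL, Finset.sum_congr rfl hR, Finset.sum_comm]
  refine Finset.sum_congr rfl fun a ha => Finset.sum_congr rfl fun i hi => ?_
  obtain ⟨h1, h2⟩ := hI i hi
  simp only [gf_iff b hb a i (by positivity) h1 (h2.trans (hle 0 h0)) (hA a ha)]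
end

section
/- For every positive integer b, Σ_{i=1}^{⌊g_b^{−1}(0)⌋} τ_b(i) ≥ Σ_{a=0}^{⌊g_b(1)⌋−1} (⌊g_b^{−1}(a + φ_{b,a})⌋ − ⌊g_b^{−1}(a+1)⌋). -/
open Finset

/-- The squared distance function. -/
noncomputable def Kf (b : ℕ) (y : ℝ) : ℝ := y * (16 * (b:ℝ) ^ 2 - 1 - y) / (4 * (y + 1))

theorem ginv_eq (b : ℕ) (hb : 0 < b) (x : ℝ) (hx : 0 ≤ x) (hx2 : (2 * x + 1) ^ 2 ≤ 4 * b - 1) :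
    ginv b x = 2 * b + 1 / 2 - Real.sqrt (Kf b ((2 * x + 1) ^ 2)) := by
  have hb1 : (1:ℝ) ≤ b := by exact_mod_cast hb
  have hb0 : (b:ℝ) ≠ 0 := by positivity
  unfold ginv Kf
  set y := (2 * x + 1) ^ 2 with hy
  have hy0 : 0 ≤ y := sq_nonneg _
  have h1 : y * (16 * (b:ℝ) ^ 2 - 1 - y) / (4 * (y + 1))
      = (2 * b) ^ 2 * (y / (y + 1) * (1 - (y + 1) / (16 * b ^ 2))) := by
    have : y + 1 ≠ 0 := by positivity
    field_simp
    ring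
  rw [h1, Real.sqrt_mul (sq_nonneg (2 * (b:ℝ))), Real.sqrt_sq (by positivity)]
  rw [Real.sqrt_mul (by positivity)]
  field_simp
  ring

theorem Kf_le_iff (b : ℕ) (y z : ℝ) (hy : 0 ≤ y) (hz : 0 ≤ z)
    (hy2 : y ≤ 4 * b - 1) (hz2 : z ≤ 4 * b - 1) : Kf b y ≤ Kf b z ↔ y ≤ z := by
  have mono : ∀ y z : ℝ, 0 ≤ y → y < z → z ≤ 4 * b - 1 → Kf b y < Kf b z := by
    intro y z hy hyz hz2
    unfold Kf
    rw [div_lt_div_iff₀ (by positivity) (by linarith)]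
    have h1 : (y + 1) * (z + 1) < 16 * (b:ℝ)^2 := by nlinarith
    nlinarith [mul_pos (sub_pos.2 hyz) (sub_pos.2 h1)]
  constructor
  · intro h
    by_contra hc
    exact absurd (mono z y hz (not_le.1 hc) hy2) (not_lt.2 h)
  · intro h
    rcases h.eq_or_lt with h | h
    · rw [h]
    · exact (mono y z hy h hz2).le

theorem ginv_anti (b : ℕ) (hb : 0 < b) (x z : ℝ) (hx : 0 ≤ x) (hxz : x ≤ z)
    (hz2 : (2 * z + 1) ^ 2 ≤ 4 * b - 1) : ginv b z ≤ ginv b x := by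
  have h : (2 * x + 1) ^ 2 ≤ (2 * z + 1) ^ 2 := by nlinarith
  rw [ginv_eq b hb x hx (h.trans hz2), ginv_eq b hb z (hx.trans hxz) hz2]
  have := Real.sqrt_le_sqrt ((Kf_le_iff b _ _ (sq_nonneg _) (sq_nonneg _) (h.trans hz2) hz2).2 h)
  linarith

theorem key (b : ℕ) (hb : 0 < b) (x t : ℝ) (hx : 0 ≤ x) (hx2 : (2 * x + 1) ^ 2 ≤ 4 * b - 1)
    (ht : 1 ≤ t) (ht2 : t ≤ 2 * b + 1 / 2) : x ≤ gf b t ↔ t ≤ ginv b x := by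
  have hb1 : (1:ℝ) ≤ b := by exact_mod_cast hb
  rw [ginv_eq b hb x hx hx2]
  unfold gf Gf
  set A := Real.sqrt (b * t - t ^ 2 / 4) with hA
  set B := Real.sqrt (b * (t - 1) - (t - 1) ^ 2 / 4) with hB
  have hA0 : 0 ≤ A := Real.sqrt_nonneg _
  have hB0 : 0 ≤ B := Real.sqrt_nonneg _
  have hA2 : A ^ 2 = b * t - t ^ 2 / 4 := Real.sq_sqrt (by nlinarith)
  have hB2 : B ^ 2 = b * (t - 1) - (t - 1) ^ 2 / 4 := Real.sq_sqrt (by nlinarith)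
  obtain ⟨s, hs⟩ : ∃ s : ℝ, s = 2 * b + 1 / 2 - t := ⟨_, rfl⟩
  have hts : t = 2 * b + 1 / 2 - s := by linarith
  have hs0 : 0 ≤ s := by linarith
  have hAB : A ^ 2 - B ^ 2 = s / 2 := by rw [hA2, hB2, hts]; ring
  have hABp : A ^ 2 + B ^ 2 = 2 * b ^ 2 - s ^ 2 / 2 - 1 / 8 := by rw [hA2, hB2, hts]; ring
  have hBA : B ≤ A := by nlinarith
  have hh : (2 * (A - B)) ^ 2 ≤ 4 * b - 1 := by nlinarith [mul_nonneg hB0 (sub_nonneg.2 hBA)]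
  have hK : Kf b ((2 * (A - B)) ^ 2) = s ^ 2 := by
    unfold Kf
    rw [div_eq_iff (by positivity)]
    have hs' : s = 2 * (A ^ 2 - B ^ 2) := by linarith
    have hb' : 16 * (b:ℝ) ^ 2 = 8 * (A ^ 2 + B ^ 2) + 4 * s ^ 2 + 1 := by linarith
    rw [hb', hs']; ring
  have e1 : (x ≤ -t / 2 + A - (-(t - 1) / 2 + B)) ↔ 2 * x + 1 ≤ 2 * (A - B) := by
    constructor <;> intro h <;> linarith
  have e2 : (t ≤ 2 * b + 1 / 2 - Real.sqrt (Kf b ((2 * x + 1) ^ 2))) ↔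
      Real.sqrt (Kf b ((2 * x + 1) ^ 2)) ≤ s := by
    constructor <;> intro h <;> linarith
  rw [e1, e2, Real.sqrt_le_left hs0, ← hK, Kf_le_iff b _ _ (sq_nonneg _) (sq_nonneg _) hx2 hh]
  rw [sq_le_sq₀ (by linarith) (by linarith)]

theorem gf_one_s16 (b : ℕ) : gf b 1 = -1 / 2 + Real.sqrt (b - 1 / 4) := by
  unfold gf Gf
  norm_num

theorem dom_of_le (b : ℕ) (hb : 0 < b) (x : ℝ) (hx : 0 ≤ x) (h : x ≤ gf b 1) :
    (2 * x + 1) ^ 2 ≤ 4 * b - 1 := by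
  have hb1 : (1:ℝ) ≤ b := by exact_mod_cast hb
  rw [gf_one_s16] at h
  have h2 : Real.sqrt ((b:ℝ) - 1 / 4) ^ 2 = b - 1 / 4 := Real.sq_sqrt (by linarith)
  nlinarith [Real.sqrt_nonneg ((b:ℝ) - 1 / 4)]

theorem le_gf_one (b : ℕ) (hb : 0 < b) (x : ℝ) (h : (2 * x + 1) ^ 2 ≤ 4 * b - 1) :
    x ≤ gf b 1 := by
  rw [gf_one_s16]
  have : x + 1 / 2 ≤ Real.sqrt (b - 1 / 4) := Real.le_sqrt_of_sq_le (by linarith)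
  linarith

theorem one_le_ginv (b : ℕ) (hb : 0 < b) (x : ℝ) (hx : 0 ≤ x)
    (h : (2 * x + 1) ^ 2 ≤ 4 * b - 1) : 1 ≤ ginv b x := by
  have hb1 : (1:ℝ) ≤ b := by exact_mod_cast hb
  exact (key b hb x 1 hx h le_rfl (by linarith)).1 (le_gf_one b hb x h)

theorem ginv_le (b : ℕ) (hb : 0 < b) (x : ℝ) (hx : 1 / 2 ≤ x)
    (h : (2 * x + 1) ^ 2 ≤ 4 * b - 1) : ginv b x ≤ 2 * b := by
  have hb1 : (1:ℝ) ≤ b := by exact_mod_cast hb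
  rw [ginv_eq b hb x (by linarith) h]
  have : 1 / 2 ≤ Real.sqrt (Kf b ((2 * x + 1) ^ 2)) := by
    apply Real.le_sqrt_of_sq_le
    unfold Kf
    have hy : 4 ≤ (2 * x + 1) ^ 2 := by nlinarith
    generalize (2 * x + 1) ^ 2 = y at *
    rw [le_div_iff₀ (by positivity)]
    have : 2 ≤ 16 * (b:ℝ) ^ 2 - 1 - y := by nlinarith
    nlinarith
  linarith

theorem phib_bd (b : ℕ) (hb : 0 < b) (a : ℕ) (h : (2 * ((a:ℝ) + 1) + 1) ^ 2 ≤ 4 * b - 1) :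
    1 / 2 ≤ phib b a ∧ phib b a ≤ 1 := by
  have ha : (0:ℝ) ≤ a := Nat.cast_nonneg a
  have h' : (2 * ((a:ℝ) + 0.5) + 1) ^ 2 ≤ 4 * b - 1 := by norm_num; nlinarith
  have h1 := one_le_ginv b hb (a + 0.5) (by positivity) h'
  have h2 := ginv_le b hb (a + 0.5) (by norm_num) h'
  unfold phib
  refine ⟨by have : 0 ≤ 1 / Real.sqrt (16 * b / ginv b ((a : ℝ) + 0.5) - 4) := by positivity
             linarith, ?_⟩
  have h3 : 8 ≤ 16 * b / ginv b ((a : ℝ) + 0.5) := by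
    rw [le_div_iff₀ (by linarith)]; linarith
  have h4 : 2 ≤ Real.sqrt (16 * b / ginv b ((a : ℝ) + 0.5) - 4) :=
    Real.le_sqrt_of_sq_le (by linarith)
  have h5 : 1 / Real.sqrt (16 * b / ginv b ((a : ℝ) + 0.5) - 4) ≤ 1 / 2 :=
    one_div_le_one_div_of_le (by norm_num) h4
  linarith

theorem taub_eq_one (b : ℕ) (hb : 0 < b) (a : ℕ) (h : (2 * ((a:ℝ) + 1) + 1) ^ 2 ≤ 4 * b - 1)
    (i : ℕ) (h1 : ginv b ((a:ℝ) + 1) < i) (h2 : (i:ℝ) ≤ ginv b ((a:ℝ) + phib b a)) :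
    taub b i = 1 := by
  have hb1 : (1:ℝ) ≤ b := by exact_mod_cast hb
  have ha : (0:ℝ) ≤ a := Nat.cast_nonneg a
  obtain ⟨p1, p2⟩ := phib_bd b hb a h
  have h' : (2 * ((a:ℝ) + 0.5) + 1) ^ 2 ≤ 4 * b - 1 := by norm_num; nlinarith
  have hp : (2 * ((a:ℝ) + phib b a) + 1) ^ 2 ≤ 4 * b - 1 := by nlinarith
  have hi : (1:ℝ) < i := lt_of_le_of_lt (one_le_ginv b hb _ (by linarith) h) h1
  have hi5 : (i:ℝ) ≤ ginv b ((a:ℝ) + 0.5) :=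
    h2.trans (ginv_anti b hb _ _ (by positivity) (by norm_num at *; linarith) hp)
  have h2b := ginv_le b hb (a + 0.5) (by norm_num) h'
  have k1 := (key b hb _ i (by linarith) hp hi.le (by linarith)).2 h2
  have k2 : gf b i < a + 1 := by
    by_contra hc
    exact absurd ((key b hb _ i (by linarith) h hi.le (by linarith)).1 (not_lt.1 hc)) (not_le.2 h1)
  have hf : ⌊gf b i⌋ = (a:ℤ) := by
    rw [Int.floor_eq_iff]
    push_cast
    constructor <;> linarith
  unfold taub
  rw [if_pos]
  refine ⟨by exact_mod_cast hi, ?_⟩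
  rw [hf]
  push_cast
  have : (1 : ℝ) / 2 + 1 / Real.sqrt (16 * b / ((i : ℝ) - 1) - 4) ≤ phib b a := by
    unfold phib
    have h3 : 8 ≤ 16 * b / ginv b ((a : ℝ) + 0.5) := by
      rw [le_div_iff₀ (by linarith)]; linarith
    have h4 : 16 * b / ginv b ((a : ℝ) + 0.5) ≤ 16 * b / ((i : ℝ) - 1) :=
      div_le_div_of_nonneg_left (by positivity) (by linarith) (by linarith)
    have := one_div_le_one_div_of_le
      (Real.sqrt_pos.2 (by linarith : 0 < 16 * b / ginv b ((a : ℝ) + 0.5) - 4))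
      (Real.sqrt_le_sqrt (sub_le_sub_right h4 4))
    linarith
  linarith

/-- `Σ_{i=1}^{⌊g_b^{−1}(0)⌋} τ_b(i) ≥ Σ_{a=0}^{⌊g_b(1)⌋−1} (⌊g_b^{−1}(a+φ_{b,a})⌋ − ⌊g_b^{−1}(a+1)⌋)`. -/
theorem sum_taub_ge (b : ℕ) (hb : 0 < b) :
    (∑ i ∈ Finset.Icc 1 (⌊ginv b 0⌋.toNat), (taub b i : ℤ)) ≥
      ∑ a ∈ Finset.range (⌊gf b 1⌋.toNat),
        (⌊ginv b ((a : ℝ) + phib b a)⌋ - ⌊ginv b ((a : ℝ) + 1)⌋) := by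
  have hb1 : (1:ℝ) ≤ b := by exact_mod_cast hb
  have main : ∀ n : ℕ, n ≤ ⌊gf b 1⌋.toNat →
      ⌊ginv b n⌋₊ ≤ ⌊ginv b 0⌋₊ ∧
      ∑ a ∈ Finset.range n, (⌊ginv b ((a : ℝ) + phib b a)⌋ - ⌊ginv b ((a : ℝ) + 1)⌋) ≤
      ∑ i ∈ Finset.Ioc ⌊ginv b n⌋₊ ⌊ginv b 0⌋₊, (taub b i : ℤ) := by
    intro n
    induction n with
    | zero => intro _; simp
    | succ n ih =>
      intro hn
      obtain ⟨ih1, ih2⟩ := ih (by omega)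
      have ha : (0:ℝ) ≤ n := Nat.cast_nonneg n
      have hle : ((n:ℝ) + 1) ≤ gf b 1 := by
        have : ((n + 1 : ℕ) : ℤ) ≤ ⌊gf b 1⌋ := by omega
        have := Int.le_floor.1 this
        push_cast at this
        exact this
      have hd := dom_of_le b hb _ (by linarith) hle
      obtain ⟨p1, p2⟩ := phib_bd b hb n hd
      have hp : (2 * ((n:ℝ) + phib b n) + 1) ^ 2 ≤ 4 * b - 1 := by nlinarith
      have g1 := one_le_ginv b hb _ (by linarith) hd
      have m1 := ginv_anti b hb ((n:ℝ) + phib b n) (n + 1) (by linarith) (by linarith) hd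
      have m2 := ginv_anti b hb n ((n:ℝ) + phib b n) (by linarith) (by linarith) hp
      have f1 := Nat.floor_le_floor m1
      have f2 := Nat.floor_le_floor m2
      rw [Finset.sum_range_succ]
      push_cast
      refine ⟨(f1.trans f2).trans ih1, ?_⟩
      rw [← Finset.sum_Ioc_consecutive _ (f1.trans f2) ih1,
        ← Finset.sum_Ioc_consecutive _ f1 f2]
      have s1 : ∑ i ∈ Finset.Ioc ⌊ginv b ((n:ℝ) + 1)⌋₊ ⌊ginv b ((n:ℝ) + phib b n)⌋₊, (taub b i : ℤ)
          = ⌊ginv b ((n : ℝ) + phib b n)⌋ - ⌊ginv b ((n : ℝ) + 1)⌋ := by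
        rw [Finset.sum_congr rfl (g := fun _ => (1:ℤ))]
        · rw [Finset.sum_const, Nat.card_Ioc, nsmul_eq_mul, mul_one, Nat.cast_sub f1,
            Int.natCast_floor_eq_floor (by linarith), Int.natCast_floor_eq_floor (by linarith)]
        · intro i hi
          rw [Finset.mem_Ioc] at hi
          have := taub_eq_one b hb n hd i ((Nat.floor_lt (by linarith)).1 hi.1)
            ((Nat.le_floor_iff (by linarith)).1 hi.2)
          rw [this]; rfl
      have s2 : 0 ≤ ∑ i ∈ Finset.Ioc ⌊ginv b ((n:ℝ) + phib b n)⌋₊ ⌊ginv b (n:ℝ)⌋₊, (taub b i : ℤ) :=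
        Finset.sum_nonneg (fun i _ => Int.natCast_nonneg _)
      linarith
  have h := (main _ le_rfl).2
  refine ge_iff_le.2 (h.trans ?_)
  rw [Int.floor_toNat (ginv b 0)]
  apply Finset.sum_le_sum_of_subset_of_nonneg
  · intro i hi
    rw [Finset.mem_Ioc] at hi
    rw [Finset.mem_Icc]
    omega
  · intro i _ _
    exact Int.natCast_nonneg _
end

section
/- For every positive integer b and every real x with 0 ≤ x ≤ g_b(1), ⌊g_b^{−1}(x)⌋ ≥ −1/2 + 2b·(1 − √((2x+1)²/((2x+1)² + 1))). -/
open Finset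

/-- For `0 ≤ x ≤ g_b(1)`,
`⌊g_b^{−1}(x)⌋ ≥ −1/2 + 2b(1 − √((2x+1)²/((2x+1)²+1)))`. -/
theorem floor_ginv_ge (b : ℕ) (hb : 0 < b) (x : ℝ) (hx0 : 0 ≤ x) (hx1 : x ≤ gf b 1) :
    (⌊ginv b x⌋ : ℝ) ≥
      -1 / 2 + 2 * b * (1 - Real.sqrt ((2 * x + 1) ^ 2 / ((2 * x + 1) ^ 2 + 1))) := by
  have hb' : (0 : ℝ) < b := by exact_mod_cast hb
  have h1 := Int.lt_floor_add_one (ginv b x)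
  have hr : Real.sqrt (1 - ((2 * x + 1) ^ 2 + 1) / (16 * (b : ℝ) ^ 2)) ≤ 1 := by
    apply Real.sqrt_le_one.2
    have : 0 ≤ ((2 * x + 1) ^ 2 + 1) / (16 * (b : ℝ) ^ 2) := by positivity
    linarith
  have hs := Real.sqrt_nonneg ((2 * x + 1) ^ 2 / ((2 * x + 1) ^ 2 + 1))
  have h2 : ginv b x ≥ 1 / 2 +
      2 * b * (1 - Real.sqrt ((2 * x + 1) ^ 2 / ((2 * x + 1) ^ 2 + 1))) := by
    unfold ginv
    generalize Real.sqrt (1 - ((2 * x + 1) ^ 2 + 1) / (16 * (b : ℝ) ^ 2)) = r at *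
    generalize Real.sqrt ((2 * x + 1) ^ 2 / ((2 * x + 1) ^ 2 + 1)) = s at *
    have e : 2 * (b : ℝ) * (1 + 1 / (4 * b) - s * r) = 1 / 2 + 2 * b * (1 - s * r) := by
      field_simp
      ring
    rw [e]
    have h3 : s * r ≤ s := mul_le_of_le_one_right hs hr
    have h4 : (b : ℝ) * (s * r) ≤ b * s := mul_le_mul_of_nonneg_left h3 hb'.le
    linarith
  linarith
end

section
/- For every positive integer b, b + s_b(⌊g_b^{−1}(0)⌋) ≥ C_b · b. -/
open Finset

lemma aux_iff (b : ℕ) (hb : 0 < b) (t x : ℝ) (ht1 : 1 ≤ t) (ht2 : t ≤ 2 * b + 1 / 2)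
    (hx0 : 0 ≤ x) (hx1 : x ≤ gf b 1) : t ≤ ginv b x ↔ x ≤ gf b t := by
  have hB : (1 : ℝ) ≤ b := by exact_mod_cast hb
  have hg1 : gf b 1 = -1 / 2 + Real.sqrt (b - 1 / 4) := by
    unfold gf Gf
    norm_num
  rw [hg1] at hx1
  obtain ⟨y, hy⟩ : ∃ y : ℝ, y = 2 * x + 1 := ⟨_, rfl⟩
  obtain ⟨z, hz⟩ : ∃ z : ℝ, z = 2 * b + 1 / 2 - t := ⟨_, rfl⟩
  have hy1 : 1 ≤ y := by linarith
  have hy2 : y ^ 2 ≤ 4 * b - 1 := by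
    have h1 : y / 2 ≤ Real.sqrt (b - 1 / 4) := by linarith
    have h2 := Real.sq_sqrt (show (0 : ℝ) ≤ b - 1 / 4 by linarith)
    nlinarith [Real.sqrt_nonneg ((b : ℝ) - 1 / 4)]
  have hz0 : 0 ≤ z := by linarith
  have hz1 : z ≤ 2 * b - 1 / 2 := by linarith
  -- A and B
  obtain ⟨A, hA⟩ : ∃ A : ℝ, A = Real.sqrt (b * t - t ^ 2 / 4) := ⟨_, rfl⟩
  obtain ⟨B, hBd⟩ : ∃ B : ℝ, B = Real.sqrt (b * (t - 1) - (t - 1) ^ 2 / 4) := ⟨_, rfl⟩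
  have hA0 : 0 ≤ A := hA ▸ Real.sqrt_nonneg _
  have hB0 : 0 ≤ B := hBd ▸ Real.sqrt_nonneg _
  have hA2 : A ^ 2 = b * t - t ^ 2 / 4 := by
    rw [hA]; apply Real.sq_sqrt; nlinarith
  have hB2 : B ^ 2 = b * (t - 1) - (t - 1) ^ 2 / 4 := by
    rw [hBd]; apply Real.sq_sqrt; nlinarith
  have hgt : gf b t = A - B - 1 / 2 := by
    unfold gf Gf
    rw [← hA, ← hBd]; ring
  have e1 : A ^ 2 - B ^ 2 = z / 2 := by rw [hA2, hB2, hz]; ring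
  have e2 : A ^ 2 + B ^ 2 = 2 * b ^ 2 - z ^ 2 / 2 - 1 / 8 := by rw [hA2, hB2, hz]; ring
  have hAB : B ≤ A := by
    apply (sq_le_sq₀ hB0 hA0).1
    linarith
  -- Z
  obtain ⟨Z, hZ⟩ : ∃ Z : ℝ, Z = 2 * b * (Real.sqrt (y ^ 2 / (y ^ 2 + 1)) *
      Real.sqrt (1 - (y ^ 2 + 1) / (16 * b ^ 2))) := ⟨_, rfl⟩
  have hZ0 : 0 ≤ Z := by rw [hZ]; positivity
  have hgi : ginv b x = 2 * b + 1 / 2 - Z := by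
    rw [hZ, hy]; unfold ginv; field_simp; ring
  have hR : (0 : ℝ) ≤ 1 - (y ^ 2 + 1) / (16 * b ^ 2) := by
    rw [sub_nonneg, div_le_one (by positivity)]
    nlinarith
  have hZ2 : 4 * Z ^ 2 * (1 + y ^ 2) = 16 * b ^ 2 * y ^ 2 - y ^ 2 - y ^ 4 := by
    rw [hZ, mul_pow, mul_pow, mul_pow, Real.sq_sqrt (by positivity), Real.sq_sqrt hR]
    field_simp
    ring
  rw [hgi, hgt]
  have s1 : t ≤ 2 * b + 1 / 2 - Z ↔ Z ^ 2 ≤ z ^ 2 := by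
    rw [sq_le_sq₀ hZ0 hz0, hz]
    constructor <;> intro h <;> linarith
  have s2 : x ≤ A - B - 1 / 2 ↔ (y / 2) ^ 2 ≤ (A - B) ^ 2 := by
    rw [sq_le_sq₀ (by linarith) (by linarith), hy]
    constructor <;> intro h <;> linarith
  have s3 : (y / 2) ^ 2 ≤ (A - B) ^ 2 ↔ 2 * (A * B) ≤ A ^ 2 + B ^ 2 - (y / 2) ^ 2 := by
    have e : (A - B) ^ 2 = A ^ 2 + B ^ 2 - 2 * (A * B) := by ring
    rw [e]
    constructor <;> intro h <;> linarith
  have hn : 0 ≤ A ^ 2 + B ^ 2 - (y / 2) ^ 2 := by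
    have e : z ^ 2 ≤ (2 * b - 1 / 2) ^ 2 := pow_le_pow_left₀ hz0 hz1 2
    rw [e2]
    linarith
  have s4 : 2 * (A * B) ≤ A ^ 2 + B ^ 2 - (y / 2) ^ 2 ↔ 4 * Z ^ 2 * (1 + y ^ 2) ≤ 4 * z ^ 2 * (1 + y ^ 2) := by
    rw [← sq_le_sq₀ (by positivity) hn, hZ2]
    have key : 16 * ((A ^ 2 + B ^ 2 - (y / 2) ^ 2) ^ 2 - (2 * (A * B)) ^ 2) =
        4 * z ^ 2 * (1 + y ^ 2) - (16 * b ^ 2 * y ^ 2 - y ^ 2 - y ^ 4) := by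
      have : (A ^ 2 + B ^ 2 - (y / 2) ^ 2) ^ 2 - (2 * (A * B)) ^ 2 =
        (A ^ 2 - B ^ 2) ^ 2 - 2 * (y / 2) ^ 2 * (A ^ 2 + B ^ 2) + (y / 2) ^ 4 := by ring
      rw [this, e1, e2]; ring
    constructor <;> intro h <;> linarith
  rw [s1, s2, s3, s4]
  rw [mul_le_mul_iff_of_pos_right (show 0 < 1 + y ^ 2 by positivity)]
  constructor <;> intro h <;> linarith

lemma aux_le (b : ℕ) (x : ℝ) : ginv b x ≤ 2 * b + 1 / 2 := by
  rcases Nat.eq_zero_or_pos b with h | h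
  · subst h; unfold ginv; norm_num
  have : ginv b x = 2 * b + 1 / 2 - 2 * b * (Real.sqrt ((2 * x + 1) ^ 2 / ((2 * x + 1) ^ 2 + 1)) *
      Real.sqrt (1 - ((2 * x + 1) ^ 2 + 1) / (16 * b ^ 2))) := by
    have : (0 : ℝ) < b := by exact_mod_cast h
    unfold ginv; field_simp; ring
  rw [this]
  have : 0 ≤ 2 * (b : ℝ) * (Real.sqrt ((2 * x + 1) ^ 2 / ((2 * x + 1) ^ 2 + 1)) *
      Real.sqrt (1 - ((2 * x + 1) ^ 2 + 1) / (16 * b ^ 2))) := by positivity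
  linarith

lemma aux_lower (b : ℕ) (hb : 0 < b) (x : ℝ) :
    2 * b + 1 / 2 - 2 * b * Real.sqrt ((2 * x + 1) ^ 2 / ((2 * x + 1) ^ 2 + 1)) ≤ ginv b x := by
  have hB : (0 : ℝ) < b := by exact_mod_cast hb
  have : ginv b x = 2 * b + 1 / 2 - 2 * b * (Real.sqrt ((2 * x + 1) ^ 2 / ((2 * x + 1) ^ 2 + 1)) *
      Real.sqrt (1 - ((2 * x + 1) ^ 2 + 1) / (16 * b ^ 2))) := by
    unfold ginv; field_simp; ring
  rw [this]
  have h1 : Real.sqrt (1 - ((2 * x + 1) ^ 2 + 1) / (16 * b ^ 2)) ≤ 1 := by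
    rw [Real.sqrt_le_one]
    have : 0 ≤ ((2 * x + 1) ^ 2 + 1) / (16 * (b : ℝ) ^ 2) := by positivity
    linarith
  have h2 := mul_le_of_le_one_right
    (Real.sqrt_nonneg ((2 * x + 1) ^ 2 / ((2 * x + 1) ^ 2 + 1))) h1
  nlinarith

lemma aux_one (b : ℕ) (hb : 0 < b) (x : ℝ) (hx0 : 0 ≤ x) (hx1 : x ≤ gf b 1) : 1 ≤ ginv b x := by
  have hB : (1 : ℝ) ≤ b := by exact_mod_cast hb
  exact (aux_iff b hb 1 x le_rfl (by linarith) hx0 hx1).2 hx1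

lemma aux_anti (b : ℕ) (hb : 0 < b) (x x' : ℝ) (hx0 : 0 ≤ x) (h : x ≤ x') (hx1 : x' ≤ gf b 1) :
    ginv b x' ≤ ginv b x := by
  have h1 := aux_one b hb x' (by linarith) hx1
  have h2 := aux_le b x'
  rw [aux_iff b hb _ x h1 h2 hx0 (by linarith)]
  exact h.trans ((aux_iff b hb _ x' h1 h2 (by linarith) hx1).1 le_rfl)

lemma aux_g1 (b : ℕ) (hb : 0 < b) : 0 ≤ gf b 1 := by
  have hB : (1 : ℝ) ≤ b := by exact_mod_cast hb
  have hg1 : gf b 1 = -1 / 2 + Real.sqrt (b - 1 / 4) := by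
    unfold gf Gf
    norm_num
  rw [hg1]
  have : (1 / 2 : ℝ) ≤ Real.sqrt (b - 1 / 4) := by
    apply Real.le_sqrt_of_sq_le; linarith
  linarith

lemma aux_2b (b : ℕ) (hb : 0 < b) : ginv b 0 ≤ 2 * b := by
  have hB : (1 : ℝ) ≤ b := by exact_mod_cast hb
  have : ginv b 0 = 2 * b + 1 / 2 - 2 * b * (Real.sqrt ((2 * 0 + 1) ^ 2 / ((2 * 0 + 1) ^ 2 + 1)) *
      Real.sqrt (1 - ((2 * 0 + 1) ^ 2 + 1) / (16 * b ^ 2))) := by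
    unfold ginv; field_simp; ring
  rw [this]
  have h1 : (1 / 2 : ℝ) ≤ Real.sqrt ((2 * 0 + 1) ^ 2 / ((2 * 0 + 1) ^ 2 + 1)) := by
    apply Real.le_sqrt_of_sq_le; norm_num
  have h2 : (1 / 2 : ℝ) ≤ Real.sqrt (1 - ((2 * 0 + 1) ^ 2 + 1) / (16 * b ^ 2)) := by
    apply Real.le_sqrt_of_sq_le
    have : ((2 * 0 + 1) ^ 2 + 1) / (16 * (b : ℝ) ^ 2) ≤ 1 / 8 := by
      rw [div_le_div_iff₀ (by positivity) (by norm_num)]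
      nlinarith
    linarith
  nlinarith [mul_le_mul h1 h2 (by norm_num) (by positivity)]

lemma aux_parity (b n : ℕ) :
    ∑ j ∈ Finset.Icc 1 n, taub b j * pb b (j - 1) = (∑ j ∈ Finset.Icc 1 n, taub b j) / 2 := by
  induction n with
  | zero => simp
  | succ n ih =>
    rw [Finset.sum_Icc_succ_top (by omega), Finset.sum_Icc_succ_top (by omega), ih]
    have ht : taub b (n + 1) = 0 ∨ taub b (n + 1) = 1 := by
      unfold taub; split_ifs <;> simp
    simp only [Nat.add_sub_cancel, pb]
    rcases ht with h | h <;> rw [h] <;> omega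

lemma aux_c (b : ℕ) (hb : 0 < b) (s t : ℝ) (hs : 0 < s) (hst : s ≤ t) (ht : t ≤ 2 * b) :
    1 / Real.sqrt (16 * b / s - 4) ≤ 1 / Real.sqrt (16 * b / t - 4) ∧
    1 / Real.sqrt (16 * b / t - 4) ≤ 1 / 2 := by
  have hB : (1 : ℝ) ≤ b := by exact_mod_cast hb
  have ht0 : 0 < t := by linarith
  have h8 : 8 ≤ 16 * b / t := by
    rw [le_div_iff₀ ht0]; linarith
  have h2 : 2 ≤ Real.sqrt (16 * b / t - 4) := by
    apply Real.le_sqrt_of_sq_le; linarith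
  refine ⟨?_, ?_⟩
  · apply one_div_le_one_div_of_le (by linarith)
    apply Real.sqrt_le_sqrt
    have : 16 * b / t ≤ 16 * b / s := by gcongr
    linarith
  · exact one_div_le_one_div_of_le (by norm_num) h2

lemma aux_count (M F : ℕ) (h : F ≤ M) :
    ∑ j ∈ Finset.Icc 1 M, (if j ≤ F then (1 : ℤ) else 0) = F := by
  rw [Finset.sum_boole]
  have : (Finset.Icc 1 M).filter (fun j => j ≤ F) = Finset.Icc 1 F := by
    ext j; simp; omega
  rw [this]; simp

/-- `b + s_b(⌊g_b^{−1}(0)⌋) ≥ C_b·b`. -/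
theorem sb_ge_Cb (b : ℕ) (hb : 0 < b) :
    (b : ℝ) + (sb b (⌊ginv b 0⌋.toNat) : ℝ) ≥ Cb b * b := by
  have hB : (1 : ℝ) ≤ b := by exact_mod_cast hb
  have hg1 := aux_g1 b hb
  obtain ⟨K, hK⟩ : ∃ K : ℕ, ⌊gf b 1⌋ = K := Int.eq_ofNat_of_zero_le (Int.floor_nonneg.2 hg1)
  have hKg : (K : ℝ) ≤ gf b 1 := by
    have := Int.floor_le (gf b 1)
    rw [hK] at this; exact_mod_cast this
  have h2b := aux_2b b hb
  -- F
  obtain ⟨F, hF⟩ : ∃ F : ℝ → ℕ, ∀ x, F x = ⌊ginv b x⌋.toNat := ⟨_, fun x => rfl⟩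
  have hFf : ∀ x, 0 ≤ x → x ≤ gf b 1 → ∀ j : ℕ, (j ≤ F x ↔ (j : ℝ) ≤ ginv b x) := by
    intro x h0 h1 j
    have := aux_one b hb x h0 h1
    rw [hF, Int.floor_toNat, Nat.le_floor_iff (by linarith)]
  have hFl : ∀ x, ginv b x - 1 ≤ F x := by
    intro x
    rw [hF, Int.floor_toNat]
    linarith [Nat.lt_floor_add_one (ginv b x)]
  obtain ⟨M, hM⟩ : ∃ M : ℕ, M = F 0 := ⟨_, rfl⟩
  have hjt : ∀ j : ℕ, j ≤ M → (j : ℝ) ≤ ginv b 0 := by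
    intro j hj; rw [hM] at hj
    exact (hFf 0 le_rfl hg1 j).1 hj
  have hiff : ∀ j : ℕ, 1 ≤ j → j ≤ M → ∀ x, 0 ≤ x → x ≤ gf b 1 → (j ≤ F x ↔ x ≤ gf b j) := by
    intro j h1 h2 x h0 hx
    rw [hFf x h0 hx]
    exact aux_iff b hb j x (by exact_mod_cast h1) (by linarith [hjt j h2]) h0 hx
  have hFM : ∀ x, 0 ≤ x → x ≤ gf b 1 → F x ≤ M := by
    intro x h0 hx
    rw [hM, hF, hF]
    exact Int.toNat_le_toNat (Int.floor_le_floor (aux_anti b hb 0 x le_rfl h0 hx))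
  have haK : ∀ a ∈ Finset.range K, ((a : ℝ) + 1) ≤ gf b 1 := by
    intro a ha
    have : ((a + 1 : ℕ) : ℝ) ≤ K := by exact_mod_cast Finset.mem_range.1 ha
    push_cast at this; linarith
  have hphi : ∀ a ∈ Finset.range K, 1 / 2 ≤ phib b a ∧ phib b a ≤ 1 ∧
      ∀ j : ℕ, 1 < j → (j : ℝ) ≤ ginv b ((a : ℝ) + 0.5) →
        (1 : ℝ) / 2 + 1 / Real.sqrt (16 * b / ((j : ℝ) - 1) - 4) ≤ phib b a := by
    intro a ha
    have hak := haK a ha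
    have ha0 : (0 : ℝ) ≤ a := by positivity
    have h5 : (a : ℝ) + 0.5 ≤ gf b 1 := by norm_num; linarith
    have h1 := aux_one b hb (a + 0.5) (by positivity) h5
    have h2 := aux_anti b hb 0 (a + 0.5) le_rfl (by positivity) h5
    unfold phib
    refine ⟨?_, ?_, ?_⟩
    · have : 0 ≤ 1 / Real.sqrt (16 * b / ginv b ((a : ℝ) + 0.5) - 4) := by positivity
      linarith
    · have := (aux_c b hb _ (ginv b ((a : ℝ) + 0.5)) (by linarith) le_rfl (by linarith)).2
      linarith
    · intro j hj hj2
      have hj' : (1 : ℝ) < j := by exact_mod_cast hj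
      have := (aux_c b hb ((j : ℝ) - 1) (ginv b ((a : ℝ) + 0.5)) (by linarith) (by linarith)
        (by linarith)).1
      linarith
  -- Claim 1
  have c1 : ∑ a ∈ Finset.range K, (F ((a : ℝ) + 1) : ℤ) ≤ ∑ j ∈ Finset.Icc 1 M, ⌊gf b j⌋ := by
    have : ∀ a ∈ Finset.range K, (F ((a : ℝ) + 1) : ℤ) =
        ∑ j ∈ Finset.Icc 1 M, (if j ≤ F ((a : ℝ) + 1) then (1 : ℤ) else 0) := by
      intro a ha
      rw [aux_count _ _ (hFM _ (by positivity) (haK a ha))]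
    rw [Finset.sum_congr rfl this, Finset.sum_comm]
    apply Finset.sum_le_sum
    intro j hj
    rw [Finset.mem_Icc] at hj
    have hg0 : 0 ≤ gf b j := (hiff j hj.1 hj.2 0 le_rfl hg1).1 (hM ▸ hj.2)
    have hfl : 0 ≤ ⌊gf b j⌋ := Int.floor_nonneg.2 hg0
    rw [Finset.sum_boole]
    have hsub : (Finset.range K).filter (fun a : ℕ => j ≤ F ((a : ℝ) + 1)) ⊆
        Finset.range ⌊gf b j⌋.toNat := by
      intro a ha
      rw [Finset.mem_filter] at ha
      have h1 := (hiff j hj.1 hj.2 _ (by positivity) (haK a ha.1)).1 ha.2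
      have h2 : ((a : ℤ) + 1) ≤ ⌊gf b j⌋ := by
        rw [Int.le_floor]; push_cast; exact h1
      rw [Finset.mem_range]; omega
    have := Finset.card_le_card hsub
    rw [Finset.card_range] at this
    push_cast
    omega
  -- Claim 2
  have c2 : ∑ a ∈ Finset.range K, ((F ((a : ℝ) + phib b a) : ℤ) - F ((a : ℝ) + 1)) ≤
      ∑ j ∈ Finset.Icc 1 M, (taub b j : ℤ) := by
    have : ∀ a ∈ Finset.range K, ((F ((a : ℝ) + phib b a) : ℤ) - F ((a : ℝ) + 1)) ≤
        ∑ j ∈ Finset.Icc 1 M, (if F ((a : ℝ) + 1) < j ∧ j ≤ F ((a : ℝ) + phib b a)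
          then (1 : ℤ) else 0) := by
      intro a ha
      obtain ⟨p1, p2, -⟩ := hphi a ha
      have hak := haK a ha
      rw [← aux_count M _ (hFM ((a : ℝ) + 1) (by positivity) hak),
        ← aux_count M _ (hFM ((a : ℝ) + phib b a) (by positivity) (by linarith)),
        ← Finset.sum_sub_distrib]
      apply Finset.sum_le_sum
      intro j hj
      split_ifs <;> first | omega | (exfalso; omega)
    refine (Finset.sum_le_sum this).trans ?_
    rw [Finset.sum_comm]
    apply Finset.sum_le_sum
    intro j hj
    rw [Finset.mem_Icc] at hj
    have main : ∀ a ∈ Finset.range K, F ((a : ℝ) + 1) < j → j ≤ F ((a : ℝ) + phib b a) →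
        ⌊gf b j⌋ = (a : ℤ) ∧ taub b j = 1 := by
      intro a ha h1 h2
      obtain ⟨p1, p2, p3⟩ := hphi a ha
      have hak := haK a ha
      have q1 : gf b j < (a : ℝ) + 1 := by
        have := (hiff j hj.1 hj.2 _ (by positivity) hak).not.1 (by omega)
        linarith
      have ha0 : (0 : ℝ) ≤ a := by positivity
      have q2 : (a : ℝ) + phib b a ≤ gf b j :=
        (hiff j hj.1 hj.2 _ (by positivity) (by linarith)).1 h2
      have q3 : ⌊gf b j⌋ = (a : ℤ) := by
        rw [Int.floor_eq_iff]; push_cast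
        constructor <;> linarith
      have q4 : 1 < j := by
        have := (hFf ((a : ℝ) + 1) (by positivity) hak 1).2
          (by push_cast; exact aux_one b hb _ (by positivity) hak)
        omega
      refine ⟨q3, ?_⟩
      have q5 : (j : ℝ) ≤ ginv b ((a : ℝ) + 0.5) := by
        refine ((hFf _ (by positivity) (by linarith) j).1 h2).trans ?_
        exact aux_anti b hb _ _ (by positivity) (by norm_num; linarith) (by linarith)
      have q6 := p3 j q4 q5
      unfold taub
      rw [if_pos]
      refine ⟨q4, ?_⟩
      rw [q3]; push_cast; linarith
    rw [Finset.sum_boole]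
    have hsub : (Finset.range K).filter
        (fun a : ℕ => F ((a : ℝ) + 1) < j ∧ j ≤ F ((a : ℝ) + phib b a)) ⊆
        {⌊gf b j⌋.toNat} := by
      intro a ha
      rw [Finset.mem_filter] at ha
      have := (main a ha.1 ha.2.1 ha.2.2).1
      rw [Finset.mem_singleton]; omega
    have hcard := Finset.card_le_card hsub
    rw [Finset.card_singleton] at hcard
    rcases Finset.eq_empty_or_nonempty ((Finset.range K).filter
        (fun a : ℕ => F ((a : ℝ) + 1) < j ∧ j ≤ F ((a : ℝ) + phib b a))) with he | ⟨a, ha⟩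
    · rw [he]; simp
    · rw [Finset.mem_filter] at ha
      rw [(main a ha.1 ha.2.1 ha.2.2).2]
      exact_mod_cast hcard
  -- assemble
  have hs : sb b M = (∑ j ∈ Finset.Icc 1 M, ⌊gf b j⌋) +
      (((∑ j ∈ Finset.Icc 1 M, taub b j) / 2 : ℕ) : ℤ) := by
    unfold sb
    rw [← aux_parity]; push_cast; rfl
  have hs2 : 2 * ∑ a ∈ Finset.range K, (F ((a : ℝ) + 1) : ℤ) +
      ∑ a ∈ Finset.range K, ((F ((a : ℝ) + phib b a) : ℤ) - F ((a : ℝ) + 1)) - 1 ≤ 2 * sb b M := by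
    have : ∑ j ∈ Finset.Icc 1 M, (taub b j : ℤ) = ((∑ j ∈ Finset.Icc 1 M, taub b j : ℕ) : ℤ) := by
      push_cast; rfl
    rw [this] at c2
    rw [hs]
    omega
  have hs3 : ∑ a ∈ Finset.range K, ((F ((a : ℝ) + phib b a) : ℝ) + F ((a : ℝ) + 1)) - 1 ≤
      2 * (sb b M : ℝ) := by
    have : ((2 * ∑ a ∈ Finset.range K, (F ((a : ℝ) + 1) : ℤ) +
      ∑ a ∈ Finset.range K, ((F ((a : ℝ) + phib b a) : ℤ) - F ((a : ℝ) + 1)) - 1 : ℤ) : ℝ) ≤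
      ((2 * sb b M : ℤ) : ℝ) := by exact_mod_cast hs2
    push_cast at this
    rw [Finset.sum_sub_distrib] at this
    rw [Finset.sum_add_distrib]
    linarith
  rw [← hF, ← hM]
  unfold Cb
  rw [hK, Int.toNat_natCast, add_mul, Finset.sum_mul]
  have hsum : ∑ a ∈ Finset.range K, ((2 - Real.sqrt ((2 * ((a : ℝ) + phib b a) + 1) ^ 2 / ((2 * ((a : ℝ) + phib b a) + 1) ^ 2 + 1))
         - Real.sqrt ((2 * (a : ℝ) + 3) ^ 2 / ((2 * (a : ℝ) + 3) ^ 2 + 1))) * b) ≤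
      ∑ a ∈ Finset.range K, (((F ((a : ℝ) + phib b a) : ℝ) + F ((a : ℝ) + 1)) / 2 + 1 / 2) := by
    apply Finset.sum_le_sum
    intro a ha
    have h1 := hFl ((a : ℝ) + phib b a)
    have h2 := hFl ((a : ℝ) + 1)
    have h3 := aux_lower b hb ((a : ℝ) + phib b a)
    have h4 := aux_lower b hb ((a : ℝ) + 1)
    rw [show 2 * ((a : ℝ) + 1) + 1 = 2 * a + 3 by ring] at h4
    linarith
  rw [Finset.sum_add_distrib, ← Finset.sum_div] at hsum
  simp only [Finset.sum_const, Finset.card_range, nsmul_eq_mul] at hsum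
  have : (1 - (1 + (((K : ℕ) : ℤ) : ℝ)) / (2 * b)) * b = b - (1 + K) / 2 := by
    push_cast; field_simp
  rw [this]
  linarith
end
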